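/- arXiv:1205.0348 — 3 statements merged into one kernel-verified Lean document; each statement's English description precedes it below -/
import Mathlib

section
/- Let s > 0 and c₁, c₂ ∈ ℝ, and let a ∈ ℝ satisfy a² + (2c₁ − 1)a − c₂ = 0 and σ := a + c₁ > −1/2. Let H = L²((0,∞), ρ^{2c₁} dρ) be the complex L² space of (0,∞) for the measure with density ρ ↦ ρ^{2c₁} with respect to Lebesgue measure, and let 𝒟 = { ρ ↦ ρ^a φ(ρ) : φ is the restriction to (0,∞) of an even Schwartz function on ℝ }. Define P on 𝒟 by (Pu)(ρ) = −u''(ρ) + s²ρ²u(ρ) − 2c₁ρ^{−1}u'(ρ) + c₂ρ^{−2}u(ρ). Then: (i) 𝒟 is a dense subspace of H, P maps 𝒟 into H and is symmetric, and P is essentially self-adjoint in H (its closure is a self-adjoint operator); (ii) there is a Hilbert basis (χ_k)_{k∈ℕ} of H with χ_k ∈ 𝒟 and Pχ_k = (4k + 1 + 2σ)s · χ_k for every k ∈ ℕ; moreover every eigenvalue of the closure of P is of the form (4k + 1 + 2σ)s for some k ∈ ℕ and has multiplicity one. -/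
open MeasureTheory
open scoped InnerProductSpace

/-- The measure `ρ^{2c₁} dρ` on `(0,∞)`. -/
noncomputable def radMeasure (c₁ : ℝ) : Measure ℝ :=
  (volume.restrict (Set.Ioi 0)).withDensity fun ρ => ENNReal.ofReal (ρ ^ (2 * c₁))

/-- The perturbed harmonic oscillator
`(Pu)(ρ) = -u''(ρ) + s²ρ²u(ρ) - 2c₁ρ⁻¹u'(ρ) + c₂ρ⁻²u(ρ)`. -/
noncomputable def Pop (s c₁ c₂ : ℝ) (f : ℝ → ℂ) : ℝ → ℂ := fun ρ =>
  -(deriv (deriv f) ρ) + (s ^ 2 * ρ ^ 2 : ℝ) * f ρ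
    - (2 * c₁ / ρ : ℝ) * deriv f ρ + (c₂ / ρ ^ 2 : ℝ) * f ρ

/-- An even Schwartz function. -/
def IsEvenSchwartz (φ : SchwartzMap ℝ ℂ) : Prop := ∀ x : ℝ, φ (-x) = φ x

/-- The function `ρ ↦ ρ^a φ(ρ)`. -/
noncomputable def powSchwartz (a : ℝ) (φ : SchwartzMap ℝ ℂ) : ℝ → ℂ :=
  fun ρ => ((ρ ^ a : ℝ) : ℂ) * φ ρ

/-- The domain `𝒟 = ρ^a 𝒮_{ev,+}` inside `L²((0,∞), ρ^{2c₁}dρ)`. -/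
def Dset (a c₁ : ℝ) : Set (Lp ℂ 2 (radMeasure c₁)) :=
  {u | ∃ φ : SchwartzMap ℝ ℂ, IsEvenSchwartz φ ∧
    (u : ℝ → ℂ) =ᵐ[radMeasure c₁] powSchwartz a φ}

/-!
Conjugation by `ρ^a` turns `P` into `Qφ = -φ'' - 2σx⁻¹φ' + s²x²φ` acting on even Schwartz functions
in `L²((0,∞), x^{2σ} dx)`. The defect of symmetry of `Q` is the derivative of
`x^{2σ}(φ̄ψ' - φ̄'ψ)`, which vanishes at `0`, since `φ'(0) = ψ'(0) = 0` and `2σ + 1 > 0`, and at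
infinity. On the functions `q(x²) e^{-sx²/2}` with `q` a polynomial, `Q` acts through a triangular
operator on `ℂ[z]` whose diagonal entries `(4k + 1 + 2σ)s` are distinct, so there is an
eigenpolynomial of each degree. These eigenfunctions are total: if `f` is orthogonal to all of them,
then all even moments of `x^{2c₁ + a} e^{-sx²/2} f(x)` vanish, hence so does the Fourier transform
of its even extension. Finally, a symmetric operator with a Hilbert basis of eigenvectors in its
domain is essentially self-adjoint, because expanding in the basis shows that its adjoint lies in
its closure; when the eigenvalues are distinct, comparing coefficients shows that they are simple
and that there are no others.
-/

section Eigenbasis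

variable {𝕜 H ι : Type*} [RCLike 𝕜] [NormedAddCommGroup H] [InnerProductSpace 𝕜 H]
  {T S : H →ₗ.[𝕜] H} {χ : HilbertBasis ι 𝕜 H} {l : ι → 𝕜}

open ComplexConjugate
open scoped LinearPMap

theorem conj_eq_of_apply_eq_smul (hT : T.IsFormalAdjoint T) {u : T.domain} (hu : (u : H) ≠ 0)
    {m : 𝕜} (h : T u = m • (u : H)) : conj m = m := by
  have key := hT u u
  rw [h, inner_smul_left, inner_smul_right] at key
  exact mul_right_cancel₀ (inner_self_ne_zero.2 hu) key

theorem inner_eq_zero_of_apply_eq_smul (hT : T.IsFormalAdjoint T) {u v : T.domain} {m n : 𝕜}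
    (hu : T u = m • (u : H)) (hv : T v = n • (v : H)) (hmn : m ≠ n) :
    ⟪(u : H), (v : H)⟫_𝕜 = 0 := by
  by_cases hu0 : (u : H) = 0
  · rw [hu0, inner_zero_left]
  have key := hT u v
  rw [hu, hv, inner_smul_left, inner_smul_right, conj_eq_of_apply_eq_smul hT hu0 hu] at key
  by_contra h
  exact hmn (mul_right_cancel₀ h key)

/-- The Hilbert basis `χ` diagonalizes the partially defined operator `T`: each `χ i` lies in the
domain of `T` and is an eigenvector with eigenvalue `l i`. -/
structure HasEigenbasis (T : H →ₗ.[𝕜] H) (χ : HilbertBasis ι 𝕜 H) (l : ι → 𝕜) : Prop where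
  mem_domain : ∀ i, χ i ∈ T.domain
  apply_eq : ∀ i, T ⟨χ i, mem_domain i⟩ = l i • χ i

theorem exists_hasEigenbasis [CompleteSpace H] (hT : T.IsFormalAdjoint T) (hl : l.Injective)
    {w : ι → H} (hw : ∀ i, w i ∈ T.domain) (hTw : ∀ i, T ⟨w i, hw i⟩ = l i • w i)
    (hw0 : ∀ i, w i ≠ 0) (htotal : ∀ v : H, (∀ i, ⟪w i, v⟫_𝕜 = 0) → v = 0) :
    ∃ χ : HilbertBasis ι 𝕜 H, HasEigenbasis T χ l := by
  let c : ι → 𝕜 := fun i => ((‖w i‖⁻¹ : ℝ) : 𝕜)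
  have hc (i) : c i ≠ 0 := by simpa [c] using hw0 i
  have horth : Orthonormal 𝕜 fun i => c i • w i := by
    refine ⟨fun i => by simp [c, norm_smul, hw0 i], fun i j hij => ?_⟩
    have hij : ⟪w i, w j⟫_𝕜 = 0 := inner_eq_zero_of_apply_eq_smul hT (hTw i) (hTw j) (hl.ne hij)
    simp only [inner_smul_left, inner_smul_right, hij, mul_zero]
  have hspan : (Submodule.span 𝕜 (Set.range fun i => c i • w i))ᗮ = ⊥ := by
    refine (Submodule.eq_bot_iff _).2 fun v hv => htotal v fun i => ?_
    have hi := (Submodule.mem_orthogonal _ v).1 hv _ (Submodule.subset_span ⟨i, rfl⟩)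
    rw [inner_smul_left] at hi
    exact (mul_eq_zero.1 hi).resolve_left (by simpa using hc i)
  refine ⟨.mkOfOrthogonalEqBot horth hspan, fun i => ?_, fun i => ?_⟩
  all_goals simp only [HilbertBasis.coe_mkOfOrthogonalEqBot]
  · exact T.domain.smul_mem _ (hw i)
  · have := T.map_smul (c i) ⟨w i, hw i⟩
    rw [hTw, smul_comm] at this
    exact this

namespace HasEigenbasis

theorem mono (h : HasEigenbasis T χ l) (hTS : T ≤ S) : HasEigenbasis S χ l where
  mem_domain i := hTS.1 (h.mem_domain i)
  apply_eq i := (hTS.2 rfl).symm.trans (h.apply_eq i)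

theorem dense_domain (h : HasEigenbasis T χ l) : Dense (T.domain : Set H) :=
  (Submodule.dense_iff_topologicalClosure_eq_top.2 χ.dense_span).mono <|
    Submodule.span_le.2 <| Set.range_subset_iff.2 h.mem_domain

theorem conj_eigenvalue (h : HasEigenbasis T χ l) (hT : T.IsFormalAdjoint T) (i : ι) :
    conj (l i) = l i :=
  conj_eq_of_apply_eq_smul hT (χ.orthonormal.ne_zero i) (h.apply_eq i)

theorem exists_eigenvalue_eq (h : HasEigenbasis T χ l) (hT : T.IsFormalAdjoint T) {u : T.domain}
    (hu : (u : H) ≠ 0) {m : 𝕜} (hm : T u = m • (u : H)) : ∃ i, m = l i := by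
  by_contra! hne
  refine hu (χ.hasSum_repr (u : H) |>.unique ?_)
  have hcoeff (i) : χ.repr u i = 0 := by
    rw [χ.repr_apply_apply]
    exact inner_eq_zero_of_apply_eq_smul hT (h.apply_eq i) hm (hne i).symm
  simpa only [hcoeff, zero_smul] using hasSum_zero

theorem eq_inner_smul (h : HasEigenbasis T χ l) (hT : T.IsFormalAdjoint T) (hl : l.Injective)
    {u : T.domain} {i : ι} (hu : T u = l i • (u : H)) : (u : H) = ⟪χ i, (u : H)⟫_𝕜 • χ i := by
  have hsum := χ.hasSum_repr (u : H)
  simp only [χ.repr_apply_apply] at hsum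
  refine hsum.unique (hasSum_single i fun j hj => ?_)
  rw [inner_eq_zero_of_apply_eq_smul hT (h.apply_eq j) hu (hl.ne hj), zero_smul]

theorem exists_eq_smul (h : HasEigenbasis T χ l) (hT : T.IsFormalAdjoint T) (hl : l.Injective)
    {u v : T.domain} (hu0 : (u : H) ≠ 0) {m : 𝕜} (hu : T u = m • (u : H))
    (hv : T v = m • (v : H)) : ∃ z : 𝕜, (v : H) = z • (u : H) := by
  obtain ⟨i, rfl⟩ := h.exists_eigenvalue_eq hT hu0 hu
  have hu' := h.eq_inner_smul hT hl hu
  have hne : ⟪χ i, (u : H)⟫_𝕜 ≠ 0 := fun h0 => hu0 (by rw [hu', h0, zero_smul])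
  refine ⟨⟪χ i, (v : H)⟫_𝕜 / ⟪χ i, (u : H)⟫_𝕜, ?_⟩
  calc (v : H) = ⟪χ i, (v : H)⟫_𝕜 • χ i := h.eq_inner_smul hT hl hv
    _ = (⟪χ i, (v : H)⟫_𝕜 / ⟪χ i, (u : H)⟫_𝕜) • ⟪χ i, (u : H)⟫_𝕜 • χ i := by
      rw [smul_smul, div_mul_cancel₀ _ hne]
    _ = _ := by rw [← hu']

section SelfAdjointness

variable [CompleteSpace H]

theorem inner_adjoint_apply (h : HasEigenbasis T χ l) (x : T†.domain) (i : ι) :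
    ⟪χ i, T† x⟫_𝕜 = conj (l i) * ⟪χ i, (x : H)⟫_𝕜 := by
  have key := (LinearPMap.adjoint_isFormalAdjoint h.dense_domain).symm ⟨χ i, h.mem_domain i⟩ x
  rw [h.apply_eq, inner_smul_left] at key
  exact key.symm

theorem adjoint_isFormalAdjoint (h : HasEigenbasis T χ l) (hT : T.IsFormalAdjoint T) :
    T†.IsFormalAdjoint T† := by
  intro x y
  rw [← χ.tsum_inner_mul_inner, ← χ.tsum_inner_mul_inner]
  refine tsum_congr fun i => ?_
  rw [h.inner_adjoint_apply y, ← inner_conj_symm, h.inner_adjoint_apply x,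
    ← inner_conj_symm (x : H) (χ i), map_mul, h.conj_eigenvalue hT, h.conj_eigenvalue hT]
  ring

theorem isClosable (h : HasEigenbasis T χ l) (hT : T.IsFormalAdjoint T) : T.IsClosable :=
  (LinearPMap.adjoint_isClosed h.dense_domain).isClosable.leIsClosable
    (hT.le_adjoint h.dense_domain)

theorem closure_eq_adjoint (h : HasEigenbasis T χ l) (hT : T.IsFormalAdjoint T) :
    T.closure = T† := by
  apply LinearPMap.eq_of_eq_graph
  rw [← (h.isClosable hT).graph_closure_eq_closure_graph]
  refine le_antisymm (Submodule.topologicalClosure_minimal _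
    (LinearPMap.le_graph_of_le (hT.le_adjoint h.dense_domain))
    (LinearPMap.adjoint_isClosed h.dense_domain)) ?_
  rintro ⟨x, y⟩ hxy
  obtain ⟨x, rfl, rfl⟩ := LinearPMap.mem_graph_iff _ |>.1 hxy
  -- the partial sums of the expansions of `x` and `T† x` form points of the graph of `T`
  refine mem_closure_of_tendsto ((χ.hasSum_repr (x : H)).prodMk (χ.hasSum_repr (T† x)))
    (.of_forall fun s => T.graph.sum_mem fun i _ => ?_)
  have hmem := T.graph.smul_mem ⟪χ i, (x : H)⟫_𝕜 (T.mem_graph ⟨χ i, h.mem_domain i⟩)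
  rw [h.apply_eq, Prod.smul_mk, smul_smul] at hmem
  rwa [χ.repr_apply_apply, χ.repr_apply_apply, h.inner_adjoint_apply, h.conj_eigenvalue hT,
    mul_comm]

theorem closure_isFormalAdjoint (h : HasEigenbasis T χ l) (hT : T.IsFormalAdjoint T) :
    T.closure.IsFormalAdjoint T.closure := by
  rw [h.closure_eq_adjoint hT]
  exact h.adjoint_isFormalAdjoint hT

theorem adjoint_closure_eq_closure (h : HasEigenbasis T χ l) (hT : T.IsFormalAdjoint T) :
    T.closure† = T.closure := by
  rw [← (h.mono T.le_closure).closure_eq_adjoint (h.closure_isFormalAdjoint hT)]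
  apply LinearPMap.eq_of_eq_graph
  rw [← (h.isClosable hT).closureIsClosable.graph_closure_eq_closure_graph]
  exact ((h.isClosable hT).closure_isClosed).submodule_topologicalClosure_eq

end SelfAdjointness

end HasEigenbasis

end Eigenbasis

section TriangularPolynomialOperator

open Polynomial

variable {R : Type*} [CommRing R] {K : Type*} [Field K]

theorem apply_sub_smul_mem_degreeLT {L : R[X] →ₗ[R] R[X]} {l : ℕ → R}
    (hL : ∀ n, L (X ^ n) - l n • X ^ n ∈ degreeLT R n) {n : ℕ} {p : R[X]}
    (hp : p ∈ degreeLT R (n + 1)) : L p - l n • p ∈ degreeLT R n := by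
  classical
  suffices degreeLT R (n + 1) ≤ (degreeLT R n).comap (L - l n • LinearMap.id) from this hp
  rw [degreeLT_eq_span_X_pow, Submodule.span_le]
  simp only [Finset.coe_image, Set.image_subset_iff]
  intro i hi
  have hi : i ≤ n := Nat.lt_succ_iff.1 (Finset.mem_range.1 hi)
  have hsplit : L (X ^ i) - l n • X ^ i = (L (X ^ i) - l i • X ^ i) + (l i - l n) • X ^ i := by
    module
  change L (X ^ i) - l n • X ^ i ∈ degreeLT R n
  rw [hsplit]
  refine add_mem (degreeLT_mono hi (hL i)) ?_
  rcases hi.eq_or_lt with rfl | hi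
  · simp
  · exact Submodule.smul_mem _ _ <|
      mem_degreeLT.2 ((degree_X_pow_le i).trans_lt (by exact_mod_cast hi))

theorem eq_zero_of_apply_eq_smul_of_degree_lt {L : K[X] →ₗ[K] K[X]} {l : ℕ → K}
    (hl : l.Injective) (hL : ∀ n, L (X ^ n) - l n • X ^ n ∈ degreeLT K n) {k : ℕ} {p : K[X]}
    (hp : p ∈ degreeLT K k) (hLp : L p = l k • p) : p = 0 := by
  by_contra hp0
  have hdeg : p.natDegree < k := by
    simpa [mem_degreeLT, degree_eq_natDegree hp0] using hp
  have hmem : (l k - l p.natDegree) • p ∈ degreeLT K p.natDegree := by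
    rw [sub_smul, ← hLp]
    exact apply_sub_smul_mem_degreeLT hL <| mem_degreeLT.2 <|
      degree_le_natDegree.trans_lt (by exact_mod_cast p.natDegree.lt_succ_self)
  rw [Submodule.smul_mem_iff _ (sub_ne_zero.2 (hl.ne hdeg.ne')), mem_degreeLT,
    degree_eq_natDegree hp0] at hmem
  exact lt_irrefl _ hmem

theorem exists_degree_eq_apply_eq_smul {L : K[X] →ₗ[K] K[X]} {l : ℕ → K} (hl : l.Injective)
    (hL : ∀ n, L (X ^ n) - l n • X ^ n ∈ degreeLT K n) (k : ℕ) :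
    ∃ q : K[X], q.degree = k ∧ L q = l k • q := by
  have hinv : ∀ p ∈ degreeLT K k,
      (L - l k • LinearMap.id : K[X] →ₗ[K] K[X]) p ∈ degreeLT K k :=
    fun p hp => apply_sub_smul_mem_degreeLT hL (degreeLT_mono k.le_succ hp)
  have hinj : Function.Injective ((L - l k • LinearMap.id).restrict hinv) := by
    refine (injective_iff_map_eq_zero _).2 fun p hp => Subtype.ext ?_
    exact eq_zero_of_apply_eq_smul_of_degree_lt hl hL p.2 (sub_eq_zero.1 (congrArg Subtype.val hp))
  have : FiniteDimensional K (degreeLT K k) := Module.Finite.of_basis (degreeLT.basis K k)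
  obtain ⟨⟨y, hy⟩, hyX⟩ := LinearMap.injective_iff_surjective.1 hinj ⟨_, hL k⟩
  have hyX : L y - l k • y = L (X ^ k) - l k • X ^ k := congrArg Subtype.val hyX
  refine ⟨X ^ k - y, ?_, ?_⟩
  · rw [degree_sub_eq_left_of_degree_lt, degree_X_pow]
    simpa using mem_degreeLT.1 hy
  · rw [map_sub, smul_sub]
    linear_combination (exp := 1) -hyX

/-- The differential operator `-4zq'' + (4sz - (2 + 4σ))q' + (1 + 2σ)sq` on polynomials, whose
eigenpolynomials are the Laguerre polynomials `L_k^{(σ - 1/2)}(sz)`. It is the conjugate of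
`-∂² - 2σx⁻¹∂ + s²x²` by `e^{-sx²/2}`, written in the variable `z = x²`. -/
noncomputable def laguerreOp (s σ : R) : R[X] →ₗ[R] R[X] where
  toFun q := -4 * X * derivative (derivative q) + (C (4 * s) * X - C (2 + 4 * σ)) * derivative q
    + C ((1 + 2 * σ) * s) * q
  map_add' p q := by simp only [map_add]; ring
  map_smul' c q := by simp only [smul_eq_C_mul, derivative_C_mul, RingHom.id_apply]; ring

theorem laguerreOp_apply (s σ : R) (q : R[X]) : laguerreOp s σ q =
    -4 * X * derivative (derivative q) + (C (4 * s) * X - C (2 + 4 * σ)) * derivative q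
      + C ((1 + 2 * σ) * s) * q := rfl

/-- The `k`-th eigenvalue `(4k + 1 + 2σ)s` of `laguerreOp s σ`. -/
def laguerreEigenvalue (s σ : R) (k : ℕ) : R := (4 * k + 1 + 2 * σ) * s

theorem laguerreEigenvalue_injective [CharZero K] {s : K} (hs : s ≠ 0) (σ : K) :
    (laguerreEigenvalue s σ).Injective := by
  intro i j hij
  simpa [laguerreEigenvalue, hs] using hij

theorem laguerreOp_X_pow_sub_mem_degreeLT (s σ : R) (n : ℕ) :
    laguerreOp s σ (X ^ n) - laguerreEigenvalue s σ n • X ^ n ∈ degreeLT R n := by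
  rcases n with _ | n
  · simp [laguerreOp_apply, laguerreEigenvalue, smul_eq_C_mul]
  have hderiv : derivative (X ^ (n + 1) : R[X]) = C ((n : R) + 1) * X ^ n := by
    simp
  have hderiv₂ : X * derivative (C ((n : R) + 1) * X ^ n) = C ((n + 1) * (n : R)) * X ^ n := by
    rcases n with _ | n
    · simp
    · simp only [derivative_C_mul_X_pow, Nat.add_sub_cancel]
      ring
  have hlower : laguerreOp s σ (X ^ (n + 1)) - laguerreEigenvalue s σ (n + 1) • X ^ (n + 1)
      = -(2 * (n + 1) * (2 * n + 1 + 2 * σ)) • X ^ n := by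
    rw [laguerreOp_apply, mul_assoc, hderiv, hderiv₂]
    simp only [laguerreEigenvalue, smul_eq_C_mul, map_add, map_mul, map_neg, map_natCast,
      map_ofNat, map_one, Nat.cast_add, Nat.cast_one]
    ring
  rw [hlower]
  exact Submodule.smul_mem _ _ <| mem_degreeLT.2 <|
    (degree_X_pow_le n).trans_lt (by exact_mod_cast n.lt_succ_self)

theorem exists_laguerreOp_eigenpolynomial [CharZero K] {s : K} (hs : s ≠ 0) (σ : K) (k : ℕ) :
    ∃ q : K[X], q.degree = k ∧ laguerreOp s σ q = laguerreEigenvalue s σ k • q :=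
  exists_degree_eq_apply_eq_smul (laguerreEigenvalue_injective hs σ)
    (laguerreOp_X_pow_sub_mem_degreeLT s σ) k

end TriangularPolynomialOperator

section PolynomialGaussian

open Polynomial Filter Topology

/-- The polynomial `p' - sXp`, which describes differentiation of `p e^{-sx²/2}`. -/
noncomputable def gaussianDerivative {R : Type*} [CommRing R] (s : R) (p : R[X]) : R[X] :=
  derivative p - C s * X * p

-- Both sides are multiplied by `X`, so that the singular term `-2σX⁻¹∂` becomes polynomial.
theorem X_mul_expand_laguerreOp {R : Type*} [CommRing R] (s σ : R) (q : R[X]) :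
    X * expand R 2 (laguerreOp s σ q) =
      -X * gaussianDerivative s (gaussianDerivative s (expand R 2 q))
        - C (2 * σ) * gaussianDerivative s (expand R 2 q) + C (s ^ 2) * X ^ 3 * expand R 2 q := by
  have hexpand : ∀ p : R[X], derivative (expand R 2 p) = 2 * X * expand R 2 (derivative p) := by
    intro p
    rw [derivative_expand]
    push_cast
    ring
  simp only [gaussianDerivative, laguerreOp_apply, hexpand, derivative_mul,
    derivative_C, derivative_X, derivative_ofNat, map_add, map_sub, map_mul, map_neg, map_ofNat,
    map_one, expand_C, expand_X, C_pow]
  ring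

/-- The function `x ↦ p(x) e^{-sx²/2}` on the line. -/
noncomputable def polyGaussian (s : ℝ) (p : ℂ[X]) : ℝ → ℂ := fun x =>
  p.eval (x : ℂ) * (Real.exp (-(s / 2) * x ^ 2) : ℝ)

variable {s : ℝ}

theorem hasDerivAt_polyGaussian (s : ℝ) (p : ℂ[X]) (x : ℝ) :
    HasDerivAt (polyGaussian s p) (polyGaussian s (gaussianDerivative (s : ℂ) p) x) x := by
  have hpoly : HasDerivAt (fun x : ℝ => p.eval (x : ℂ)) (p.derivative.eval (x : ℂ)) x :=
    (p.hasDerivAt (x : ℂ)).comp_ofReal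
  have hexp := ((hasDerivAt_pow 2 x).const_mul (-(s / 2))).exp
  convert! hpoly.mul hexp.ofReal_comp using 1
  simp only [polyGaussian, gaussianDerivative, eval_sub, eval_mul, eval_C, eval_X]
  push_cast
  ring

theorem iteratedDeriv_polyGaussian (s : ℝ) (n : ℕ) (p : ℂ[X]) :
    iteratedDeriv n (polyGaussian s p)
      = polyGaussian s ((gaussianDerivative (s : ℂ))^[n] p) := by
  induction n generalizing p with
  | zero => simp
  | succ n ih =>
    rw [iteratedDeriv_succ', funext fun x => (hasDerivAt_polyGaussian s p x).deriv, ih,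
      Function.iterate_succ_apply]

theorem contDiff_polyGaussian (s : ℝ) (p : ℂ[X]) {n : WithTop ℕ∞} :
    ContDiff ℝ n (polyGaussian s p) := by
  have hpoly : ContDiff ℝ n fun x : ℝ => p.eval (x : ℂ) :=
    (p.contDiff_aeval (𝕜 := ℂ) n).restrict_scalars ℝ |>.comp Complex.ofRealCLM.contDiff
  have hexp : ContDiff ℝ n fun x : ℝ => Real.exp (-(s / 2) * x ^ 2) := by fun_prop
  exact hpoly.mul <| Complex.ofRealCLM.contDiff.comp hexp

theorem tendsto_polyGaussian_cocompact (hs : 0 < s) (p : ℂ[X]) :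
    Tendsto (polyGaussian s p) (cocompact ℝ) (𝓝 0) := by
  induction p using Polynomial.induction_on' with
  | add p q hp hq =>
    have hadd : polyGaussian s (p + q) = fun x => polyGaussian s p x + polyGaussian s q x :=
      funext fun x => by simp only [polyGaussian, eval_add, add_mul]
    simpa only [hadd, add_zero] using hp.add hq
  | monomial n a =>
    have := (tendsto_rpow_abs_mul_exp_neg_mul_sq_cocompact (half_pos hs) n).const_mul ‖a‖
    rw [mul_zero] at this
    refine squeeze_zero_norm (fun x => le_of_eq ?_) this
    simp only [polyGaussian, eval_monomial, norm_mul, norm_pow, Complex.norm_real,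
      Real.norm_eq_abs, Real.abs_exp, Real.rpow_natCast]
    ring

theorem isBounded_range_polyGaussian (hs : 0 < s) (p : ℂ[X]) :
    Bornology.IsBounded (Set.range (polyGaussian s p)) :=
  ZeroAtInftyContinuousMap.isBounded_range
    ⟨⟨polyGaussian s p, (contDiff_polyGaussian s p (n := 0)).continuous⟩,
      tendsto_polyGaussian_cocompact hs p⟩

/-- `polyGaussian s p` as a Schwartz function. -/
noncomputable def polyGaussianSchwartz (hs : 0 < s) (p : ℂ[X]) : SchwartzMap ℝ ℂ where
  toFun := polyGaussian s p
  smooth' := contDiff_polyGaussian s p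
  decay' k n := by
    obtain ⟨B, hB⟩ :=
      (isBounded_range_polyGaussian hs (X ^ k * (gaussianDerivative (s : ℂ))^[n] p)).exists_norm_le
    refine ⟨B, fun x => ?_⟩
    rw [norm_iteratedFDeriv_eq_norm_iteratedDeriv, iteratedDeriv_polyGaussian]
    simpa [polyGaussian, mul_assoc] using hB _ ⟨x, rfl⟩

theorem polyGaussianSchwartz_apply (hs : 0 < s) (p : ℂ[X]) (x : ℝ) :
    polyGaussianSchwartz hs p x = polyGaussian s p x := rfl

theorem derivCLM_polyGaussianSchwartz (hs : 0 < s) (p : ℂ[X]) :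
    SchwartzMap.derivCLM ℂ ℂ (polyGaussianSchwartz hs p)
      = polyGaussianSchwartz hs (gaussianDerivative (s : ℂ) p) :=
  SchwartzMap.ext fun x => (hasDerivAt_polyGaussian s p x).deriv

end PolynomialGaussian

section RadialMeasure

open Set

variable {E : Type*} [NormedAddCommGroup E] [NormedSpace ℝ E] {c : ℝ}

theorem measurable_radMeasure_density (c : ℝ) :
    Measurable fun ρ : ℝ => ENNReal.ofReal (ρ ^ (2 * c)) := by
  fun_prop

theorem ae_radMeasure (c : ℝ) : ae (radMeasure c) = ae (volume.restrict (Ioi (0 : ℝ))) := by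
  refine (withDensity_absolutelyContinuous _ _).ae_le.antisymm ?_
  refine (withDensity_absolutelyContinuous' (measurable_radMeasure_density c).aemeasurable ?_).ae_le
  filter_upwards [ae_restrict_mem measurableSet_Ioi] with x hx
  simpa using Real.rpow_pos_of_pos hx (2 * c)

theorem ae_radMeasure_mem_Ioi (c : ℝ) : ∀ᵐ x ∂radMeasure c, x ∈ Ioi (0 : ℝ) := by
  rw [ae_radMeasure]
  exact ae_restrict_mem measurableSet_Ioi

theorem integrable_radMeasure_iff {g : ℝ → E} :
    Integrable g (radMeasure c) ↔ IntegrableOn (fun x => x ^ (2 * c) • g x) (Ioi 0) := by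
  rw [radMeasure, integrable_withDensity_iff_integrable_smul' (measurable_radMeasure_density c)
    (by simp)]
  refine integrable_congr ?_
  filter_upwards [ae_restrict_mem measurableSet_Ioi] with x hx
  rw [ENNReal.toReal_ofReal (Real.rpow_nonneg hx.le _)]

theorem integral_radMeasure (g : ℝ → E) :
    ∫ x, g x ∂radMeasure c = ∫ x in Ioi (0 : ℝ), x ^ (2 * c) • g x := by
  rw [radMeasure, integral_withDensity_eq_integral_toReal_smul (measurable_radMeasure_density c)
    (by simp)]
  refine integral_congr_ae ?_
  filter_upwards [ae_restrict_mem measurableSet_Ioi] with x hx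
  rw [ENNReal.toReal_ofReal (Real.rpow_nonneg hx.le _)]

theorem eqOn_Ioi_of_ae_eq_radMeasure {Y : Type*} [TopologicalSpace Y] [T2Space Y] {f g : ℝ → Y}
    (hf : ContinuousOn f (Ioi 0)) (hg : ContinuousOn g (Ioi 0)) (h : f =ᵐ[radMeasure c] g) :
    EqOn f g (Ioi 0) := by
  rw [Filter.EventuallyEq, ae_radMeasure] at h
  exact Measure.eqOn_open_of_ae_eq h isOpen_Ioi hf hg

end RadialMeasure

section RapidDecay

open Filter Topology Asymptotics Set

variable {E : Type*} [NormedAddCommGroup E] {α β : ℝ} {f g : ℝ → E}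

/-- Continuous functions on `(0, ∞)` that are `O(x^α)` at `0` and decay at infinity faster than any
power. -/
structure RapidlyDecaying (α : ℝ) (f : ℝ → E) : Prop where
  continuousOn : ContinuousOn f (Ioi 0)
  isBigO_zero : f =O[𝓝[>] 0] fun x => x ^ α
  isBigO_atTop : ∀ r : ℝ, f =O[atTop] fun x => x ^ r

namespace RapidlyDecaying

theorem congr (hf : RapidlyDecaying α f) (h : EqOn f g (Ioi 0)) : RapidlyDecaying α g where
  continuousOn := hf.continuousOn.congr h.symm
  isBigO_zero := hf.isBigO_zero.congr' (h.eventuallyEq_of_mem self_mem_nhdsWithin) .rfl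
  isBigO_atTop r := (hf.isBigO_atTop r).congr' (h.eventuallyEq_of_mem (Ioi_mem_atTop 0)) .rfl

theorem mono (hf : RapidlyDecaying α f) (h : β ≤ α) : RapidlyDecaying β f where
  continuousOn := hf.continuousOn
  isBigO_zero := by
    refine hf.isBigO_zero.trans (.of_bound' ?_)
    filter_upwards [Ioo_mem_nhdsGT zero_lt_one] with x hx
    rw [Real.norm_rpow_of_nonneg hx.1.le, Real.norm_rpow_of_nonneg hx.1.le, Real.norm_eq_abs,
      abs_of_pos hx.1]
    exact Real.rpow_le_rpow_of_exponent_ge hx.1 hx.2.le h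
  isBigO_atTop := hf.isBigO_atTop

theorem add (hf : RapidlyDecaying α f) (hg : RapidlyDecaying α g) :
    RapidlyDecaying α fun x => f x + g x :=
  ⟨hf.continuousOn.add hg.continuousOn, hf.isBigO_zero.add hg.isBigO_zero,
    fun r => (hf.isBigO_atTop r).add (hg.isBigO_atTop r)⟩

theorem sub (hf : RapidlyDecaying α f) (hg : RapidlyDecaying α g) :
    RapidlyDecaying α fun x => f x - g x :=
  ⟨hf.continuousOn.sub hg.continuousOn, hf.isBigO_zero.sub hg.isBigO_zero,
    fun r => (hf.isBigO_atTop r).sub (hg.isBigO_atTop r)⟩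

theorem const_smul {𝕜 : Type*} [NormedField 𝕜] [NormedSpace 𝕜 E] (hf : RapidlyDecaying α f)
    (c : 𝕜) : RapidlyDecaying α fun x => c • f x :=
  ⟨hf.continuousOn.const_smul c, hf.isBigO_zero.const_smul_left c,
    fun r => (hf.isBigO_atTop r).const_smul_left c⟩

theorem norm (hf : RapidlyDecaying α f) : RapidlyDecaying α fun x => ‖f x‖ :=
  ⟨hf.continuousOn.norm, hf.isBigO_zero.norm_left, fun r => (hf.isBigO_atTop r).norm_left⟩

theorem star [StarAddMonoid E] [NormedStarGroup E] (hf : RapidlyDecaying α f) :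
    RapidlyDecaying α fun x => star (f x) where
  continuousOn := hf.continuousOn.star
  isBigO_zero := (isBigO_of_le _ fun x => (norm_star (f x)).le).trans hf.isBigO_zero
  isBigO_atTop r := (isBigO_of_le _ fun x => (norm_star (f x)).le).trans (hf.isBigO_atTop r)

theorem mul {A : Type*} [NormedRing A] {f g : ℝ → A} (hf : RapidlyDecaying α f)
    (hg : RapidlyDecaying β g) : RapidlyDecaying (α + β) fun x => f x * g x where
  continuousOn := hf.continuousOn.mul hg.continuousOn
  isBigO_zero := by
    refine (hf.isBigO_zero.mul hg.isBigO_zero).congr' .rfl ?_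
    filter_upwards [self_mem_nhdsWithin] with x hx using (Real.rpow_add hx α β).symm
  isBigO_atTop r := by
    refine ((hf.isBigO_atTop r).mul (hg.isBigO_atTop 0)).congr_right fun x => ?_
    rw [Real.rpow_zero, mul_one]

theorem rpow_smul [NormedSpace ℝ E] (hf : RapidlyDecaying α f) (β : ℝ) :
    RapidlyDecaying (β + α) fun x => x ^ β • f x where
  continuousOn :=
    (continuousOn_id.rpow_const fun x hx => .inl (ne_of_gt hx)).smul hf.continuousOn
  isBigO_zero := by
    refine ((isBigO_refl (fun x : ℝ => x ^ β) _).smul hf.isBigO_zero).congr' .rfl ?_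
    filter_upwards [self_mem_nhdsWithin] with x hx using (Real.rpow_add hx β α).symm
  isBigO_atTop r := by
    refine ((isBigO_refl (fun x : ℝ => x ^ β) _).smul (hf.isBigO_atTop (r - β))).congr' .rfl ?_
    filter_upwards [eventually_gt_atTop 0] with x hx
    rw [smul_eq_mul, ← Real.rpow_add hx, add_sub_cancel]

theorem integrableOn (hf : RapidlyDecaying α f) (hα : -1 < α) : IntegrableOn f (Ioi 0) := by
  have hmeas : AEStronglyMeasurable f (volume.restrict (Ioi 0)) :=
    hf.continuousOn.aestronglyMeasurable measurableSet_Ioi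
  have hnorm : IntegrableOn (fun x => ‖f x‖) (Ioi 0) := by
    simpa using mellin_convergent_of_isBigO_scalar (a := 2) (b := -α) (s := 1)
      (hf.norm.continuousOn.locallyIntegrableOn measurableSet_Ioi) (hf.norm.isBigO_atTop _)
      one_lt_two (by simpa using hf.norm.isBigO_zero) (by linarith)
  exact (integrable_norm_iff hmeas).1 hnorm

theorem memLp_radMeasure_two {c : ℝ} (hf : RapidlyDecaying α f) (hα : -1 / 2 < α + c) :
    MemLp f 2 (radMeasure c) := by
  have hmeas : AEStronglyMeasurable f (radMeasure c) :=
    (hf.continuousOn.aestronglyMeasurable measurableSet_Ioi).mono_ac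
      (withDensity_absolutelyContinuous _ _)
  rw [memLp_two_iff_integrable_sq_norm hmeas, integrable_radMeasure_iff]
  simp only [sq]
  exact ((hf.norm.mul hf.norm).rpow_smul (2 * c)).integrableOn (by linarith)

theorem tendsto_nhdsGT_zero (hf : RapidlyDecaying α f) (hα : 0 < α) :
    Tendsto f (𝓝[>] 0) (𝓝 0) := by
  refine hf.isBigO_zero.trans_tendsto (tendsto_nhdsWithin_of_tendsto_nhds ?_)
  simpa [Real.zero_rpow hα.ne'] using (Real.continuousAt_rpow_const 0 α (.inr hα.le)).tendsto

theorem tendsto_atTop_zero (hf : RapidlyDecaying α f) : Tendsto f atTop (𝓝 0) :=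
  (hf.isBigO_atTop (-1)).trans_tendsto (tendsto_rpow_neg_atTop one_pos)

theorem integral_deriv_eq_zero [NormedSpace ℝ E] [CompleteSpace E] {f' : ℝ → E}
    (hf : RapidlyDecaying α f) (hα : 0 < α) (hderiv : ∀ x ∈ Ioi (0 : ℝ), HasDerivAt f (f' x) x)
    (hint : IntegrableOn f' (Ioi 0)) : ∫ x in Ioi (0 : ℝ), f' x = 0 := by
  -- `f` may jump at `0`, where its limit from the right is `0`.
  have heq : EqOn f (Function.update f 0 0) (Ioi 0) := fun x hx =>
    (Function.update_of_ne (ne_of_gt hx) _ _).symm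
  have hcont : ContinuousWithinAt (Function.update f 0 0) (Ici 0) 0 := by
    rw [continuousWithinAt_update_same, Ici_sdiff_left]
    exact hf.tendsto_nhdsGT_zero hα
  rw [integral_Ioi_of_hasDerivAt_of_tendsto hcont
    (fun x hx => (hderiv x hx).congr_of_eventuallyEq
      (heq.symm.eventuallyEq_of_mem (Ioi_mem_nhds hx))) hint
    (hf.congr heq).tendsto_atTop_zero, Function.update_self, sub_zero]

end RapidlyDecaying

end RapidDecay

section EvenSchwartz

open Filter Set ComplexConjugate
open SchwartzMap (derivCLM)

/-- The space of even Schwartz functions. -/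
def evenSchwartz : Submodule ℂ (SchwartzMap ℝ ℂ) where
  carrier := {φ | IsEvenSchwartz φ}
  zero_mem' _ := rfl
  add_mem' hφ hψ x := congrArg₂ (· + ·) (hφ x) (hψ x)
  smul_mem' c _ hφ x := congrArg (c * ·) (hφ x)

variable {E : Type*} [NormedAddCommGroup E] [NormedSpace ℝ E] {φ ψ : SchwartzMap ℝ ℂ}

theorem derivCLM_apply_zero_of_even (hφ : φ ∈ evenSchwartz) : derivCLM ℂ ℂ φ 0 = 0 := by
  have h := deriv_comp_neg φ 0
  rw [funext hφ, neg_zero] at h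
  exact self_eq_neg.1 h

theorem eq_of_even_of_eqOn_Ioi (hφ : φ ∈ evenSchwartz) (hψ : ψ ∈ evenSchwartz)
    (h : EqOn φ ψ (Ioi 0)) : φ = ψ := by
  have hIci : EqOn φ ψ (Ici 0) := by
    simpa only [closure_Ioi] using h.closure φ.continuous ψ.continuous
  ext x
  rcases le_total 0 x with hx | hx
  · exact hIci hx
  · rw [← hφ, ← hψ, hIci (neg_nonneg.2 hx)]

theorem rapidlyDecaying_schwartz (φ : SchwartzMap ℝ E) : RapidlyDecaying 0 φ where
  continuousOn := φ.continuous.continuousOn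
  isBigO_zero := by
    simpa only [Real.rpow_zero] using
      (φ.continuous.continuousAt.isBigO_one ℝ).mono nhdsWithin_le_nhds
  isBigO_atTop r := by
    refine ((φ.isBigO_cocompact_rpow r).mono atTop_le_cocompact).congr' .rfl ?_
    filter_upwards [eventually_gt_atTop 0] with x hx
    rw [Real.norm_eq_abs, abs_of_pos hx]

theorem rapidlyDecaying_derivCLM_of_even (hφ : φ ∈ evenSchwartz) :
    RapidlyDecaying 1 (derivCLM ℂ ℂ φ) where
  continuousOn := (derivCLM ℂ ℂ φ).continuous.continuousOn
  isBigO_zero := by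
    have h := ((derivCLM ℂ ℂ φ).hasDerivAt 0).isBigO_sub
    simp only [derivCLM_apply_zero_of_even hφ, sub_zero] at h
    simpa only [Real.rpow_one] using h.mono nhdsWithin_le_nhds
  isBigO_atTop := (rapidlyDecaying_schwartz _).isBigO_atTop

/-- The operator `-φ'' - 2σx⁻¹φ' + s²x²φ`, into which conjugation by `x^a` turns `Pop s c₁ c₂` when
`a² + (2c₁ - 1)a = c₂` and `σ = a + c₁`. -/
noncomputable def conjugatedPop (s σ : ℝ) : SchwartzMap ℝ ℂ →ₗ[ℂ] ℝ → ℂ where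
  toFun φ x := -derivCLM ℂ ℂ (derivCLM ℂ ℂ φ) x - (2 * σ * x⁻¹ : ℝ) * derivCLM ℂ ℂ φ x
    + (s ^ 2 * x ^ 2 : ℝ) * φ x
  map_add' φ ψ := by
    ext x
    simp only [map_add, add_apply, Pi.add_apply]
    ring
  map_smul' c φ := by
    ext x
    simp only [map_smul, smul_apply, Pi.smul_apply, smul_eq_mul, RingHom.id_apply]
    ring

theorem conjugatedPop_apply (s σ : ℝ) (φ : SchwartzMap ℝ ℂ) (x : ℝ) :
    conjugatedPop s σ φ x = -derivCLM ℂ ℂ (derivCLM ℂ ℂ φ) x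
      - (2 * σ * x⁻¹ : ℝ) * derivCLM ℂ ℂ φ x + (s ^ 2 * x ^ 2 : ℝ) * φ x := rfl

theorem rapidlyDecaying_conjugatedPop (s σ : ℝ) (hφ : φ ∈ evenSchwartz) :
    RapidlyDecaying 0 (conjugatedPop s σ φ) := by
  have hsecond := (rapidlyDecaying_schwartz (derivCLM ℂ ℂ (derivCLM ℂ ℂ φ))).const_smul (-1 : ℝ)
  have hfirst := ((rapidlyDecaying_derivCLM_of_even hφ).rpow_smul (-1)).const_smul (2 * σ)
  have hzeroth := ((rapidlyDecaying_schwartz φ).rpow_smul 2).const_smul (s ^ 2)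
  refine ((hsecond.sub (hfirst.mono (by norm_num))).add (hzeroth.mono (by norm_num))).congr ?_
  intro x _
  simp only [conjugatedPop_apply, Complex.real_smul, Real.rpow_neg_one, Real.rpow_two]
  push_cast
  ring

theorem hasDerivAt_powSchwartz (b : ℝ) (φ : SchwartzMap ℝ ℂ) {x : ℝ} (hx : 0 < x) :
    HasDerivAt (powSchwartz b φ)
      (b * powSchwartz (b - 1) φ x + powSchwartz b (derivCLM ℂ ℂ φ) x) x := by
  have hpow := (Real.hasDerivAt_rpow_const (p := b) (.inl hx.ne')).ofReal_comp
  convert! hpow.mul (φ.hasDerivAt x) using 1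
  simp only [powSchwartz, SchwartzMap.derivCLM_apply]
  push_cast
  ring

theorem Pop_powSchwartz {c₁ c₂ a : ℝ} (s : ℝ) (ha : a ^ 2 + (2 * c₁ - 1) * a - c₂ = 0)
    (φ : SchwartzMap ℝ ℂ) {x : ℝ} (hx : 0 < x) :
    Pop s c₁ c₂ (powSchwartz a φ) x = (x ^ a : ℝ) * conjugatedPop s (a + c₁) φ x := by
  have hderiv : EqOn (deriv (powSchwartz a φ))
      (fun y => a * powSchwartz (a - 1) φ y + powSchwartz a (derivCLM ℂ ℂ φ) y) (Ioi 0) :=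
    fun y hy => (hasDerivAt_powSchwartz a φ hy).deriv
  have hderiv₂ := ((hasDerivAt_powSchwartz (a - 1) φ hx).const_mul (a : ℂ)).fun_add
    (hasDerivAt_powSchwartz a (derivCLM ℂ ℂ φ) hx)
  have hc₂ : c₂ = a ^ 2 + (2 * c₁ - 1) * a := by linarith
  rw [Pop, (hderiv.eventuallyEq_of_mem (Ioi_mem_nhds hx)).deriv_eq, hderiv₂.deriv, hderiv hx]
  simp only [powSchwartz, conjugatedPop_apply, Real.rpow_sub_one hx.ne', hc₂]
  have hx' : (x : ℂ) ≠ 0 := by exact_mod_cast hx.ne'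
  push_cast
  field_simp
  ring

theorem eqOn_Ioi_of_rpow_mul_ae_eq {a c : ℝ} {f g : ℝ → ℂ} (hf : ContinuousOn f (Ioi 0))
    (hg : ContinuousOn g (Ioi 0))
    (h : (fun x => ((x ^ a : ℝ) : ℂ) * f x) =ᵐ[radMeasure c] fun x => ((x ^ a : ℝ) : ℂ) * g x) :
    EqOn f g (Ioi 0) := by
  refine eqOn_Ioi_of_ae_eq_radMeasure (c := c) hf hg ?_
  filter_upwards [h, ae_radMeasure_mem_Ioi c] with x hx hpos
  exact mul_left_cancel₀ (by exact_mod_cast (Real.rpow_pos_of_pos hpos a).ne') hx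

/-- The weighted Wronskian `x^{2σ}(φ̄ψ' - φ̄'ψ)`, whose derivative is the defect of symmetry of
`conjugatedPop s σ`. -/
noncomputable def weightedWronskian (σ : ℝ) (φ ψ : SchwartzMap ℝ ℂ) : ℝ → ℂ := fun x =>
  (x ^ (2 * σ) : ℝ) * (conj (φ x) * derivCLM ℂ ℂ ψ x - conj (derivCLM ℂ ℂ φ x) * ψ x)

theorem hasDerivAt_weightedWronskian (s σ : ℝ) (φ ψ : SchwartzMap ℝ ℂ) {x : ℝ} (hx : 0 < x) :
    HasDerivAt (weightedWronskian σ φ ψ) ((x ^ (2 * σ) : ℝ) *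
      (conj (conjugatedPop s σ φ x) * ψ x - conj (φ x) * conjugatedPop s σ ψ x)) x := by
  have hpow := (Real.hasDerivAt_rpow_const (p := 2 * σ) (.inl hx.ne')).ofReal_comp
  have hsub := ((φ.hasDerivAt x).star.mul ((derivCLM ℂ ℂ ψ).hasDerivAt x)).sub
    (((derivCLM ℂ ℂ φ).hasDerivAt x).star.mul (ψ.hasDerivAt x))
  convert! hpow.mul hsub using 1
  rw [Real.rpow_sub_one hx.ne']
  have hx' : (x : ℂ) ≠ 0 := by exact_mod_cast hx.ne'
  simp only [conjugatedPop_apply, SchwartzMap.derivCLM_apply, Pi.sub_apply, Pi.mul_apply, map_add,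
    map_sub, map_mul, map_neg, Complex.conj_ofReal, Complex.star_def]
  push_cast
  field_simp
  ring

theorem rapidlyDecaying_weightedWronskian (σ : ℝ) (hφ : φ ∈ evenSchwartz)
    (hψ : ψ ∈ evenSchwartz) : RapidlyDecaying (2 * σ + 1) (weightedWronskian σ φ ψ) := by
  have hleft := (rapidlyDecaying_schwartz φ).star.mul (rapidlyDecaying_derivCLM_of_even hψ)
  have hright := (rapidlyDecaying_derivCLM_of_even hφ).star.mul (rapidlyDecaying_schwartz ψ)
  refine (((hleft.mono (zero_add 1).ge).sub (hright.mono (add_zero 1).ge)).rpow_smul _).congr ?_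
  exact fun x _ => Complex.real_smul

end EvenSchwartz

section RadialOperator

open Filter Set ComplexConjugate

variable {a c₁ : ℝ}

section InnerProduct

variable {u v : Lp ℂ 2 (radMeasure c₁)} {f g : ℝ → ℂ}

theorem rpow_smul_inner_ae_eq (hu : u =ᵐ[radMeasure c₁] fun x => ((x ^ a : ℝ) : ℂ) * f x)
    (hv : v =ᵐ[radMeasure c₁] fun x => ((x ^ a : ℝ) : ℂ) * g x) :
    (fun x => x ^ (2 * c₁) • ⟪u x, v x⟫_ℂ) =ᵐ[volume.restrict (Ioi 0)]
      fun x => (x ^ (2 * (a + c₁)) : ℝ) * (conj (f x) * g x) := by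
  rw [EventuallyEq, ae_radMeasure] at hu hv
  filter_upwards [hu, hv, ae_restrict_mem measurableSet_Ioi] with x hux hvx hx
  have hpow : x ^ (2 * (a + c₁)) = x ^ (2 * c₁) * (x ^ a * x ^ a) := by
    rw [← Real.rpow_add hx, ← Real.rpow_add hx]
    ring_nf
  rw [hux, hvx, hpow]
  simp only [RCLike.inner_apply, map_mul, Complex.conj_ofReal, Complex.real_smul]
  push_cast
  ring

theorem integrableOn_rpow_mul_conj_mul (hu : u =ᵐ[radMeasure c₁] fun x => ((x ^ a : ℝ) : ℂ) * f x)
    (hv : v =ᵐ[radMeasure c₁] fun x => ((x ^ a : ℝ) : ℂ) * g x) :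
    IntegrableOn (fun x => ((x ^ (2 * (a + c₁)) : ℝ) : ℂ) * (conj (f x) * g x)) (Ioi 0) :=
  (integrable_radMeasure_iff.1 (L2.integrable_inner u v)).congr (rpow_smul_inner_ae_eq hu hv)

theorem inner_eq_integral_rpow_mul_conj_mul
    (hu : u =ᵐ[radMeasure c₁] fun x => ((x ^ a : ℝ) : ℂ) * f x)
    (hv : v =ᵐ[radMeasure c₁] fun x => ((x ^ a : ℝ) : ℂ) * g x) :
    ⟪u, v⟫_ℂ = ∫ x in Ioi (0 : ℝ), ((x ^ (2 * (a + c₁)) : ℝ) : ℂ) * (conj (f x) * g x) := by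
  rw [L2.inner_def, integral_radMeasure, integral_congr_ae (rpow_smul_inner_ae_eq hu hv)]

end InnerProduct

theorem RapidlyDecaying.memLp_rpow_mul {f : ℝ → ℂ} (hf : RapidlyDecaying 0 f)
    (hσ : -1 / 2 < a + c₁) : MemLp (fun x => ((x ^ a : ℝ) : ℂ) * f x) 2 (radMeasure c₁) :=
  ((hf.rpow_smul a).congr fun _ _ => Complex.real_smul).memLp_radMeasure_two (by linarith)

/-- The parametrization `φ ↦ x^a φ` of the domain of the radial operator. -/
noncomputable def powSchwartzToLp (hσ : -1 / 2 < a + c₁) :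
    evenSchwartz →ₗ[ℂ] Lp ℂ 2 (radMeasure c₁) where
  toFun φ := ((rapidlyDecaying_schwartz φ.1).memLp_rpow_mul hσ).toLp _
  map_add' φ ψ := by
    rw [← MemLp.toLp_add]
    exact MemLp.toLp_congr _ _ (.of_forall fun x => mul_add _ _ _)
  map_smul' z φ := by
    rw [RingHom.id_apply, ← MemLp.toLp_const_smul]
    exact MemLp.toLp_congr _ _ (.of_forall fun x => mul_left_comm _ _ _)

/-- The map `φ ↦ x^a Qφ = P(x^a φ)`, where `Q = conjugatedPop s (a + c₁)`. -/
noncomputable def popPowSchwartzToLp (s : ℝ) (hσ : -1 / 2 < a + c₁) :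
    evenSchwartz →ₗ[ℂ] Lp ℂ 2 (radMeasure c₁) where
  toFun φ := ((rapidlyDecaying_conjugatedPop s (a + c₁) φ.2).memLp_rpow_mul hσ).toLp _
  map_add' φ ψ := by
    rw [← MemLp.toLp_add]
    refine MemLp.toLp_congr _ _ (.of_forall fun x => ?_)
    simp only [Submodule.coe_add, map_add, Pi.add_apply, mul_add]
  map_smul' z φ := by
    rw [RingHom.id_apply, ← MemLp.toLp_const_smul]
    refine MemLp.toLp_congr _ _ (.of_forall fun x => ?_)
    simp only [Submodule.coe_smul, map_smul, Pi.smul_apply, smul_eq_mul, mul_left_comm]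

variable {s : ℝ} (hσ : -1 / 2 < a + c₁)

theorem coeFn_powSchwartzToLp (φ : evenSchwartz) :
    powSchwartzToLp hσ φ =ᵐ[radMeasure c₁] powSchwartz a φ :=
  MemLp.coeFn_toLp ((rapidlyDecaying_schwartz φ.1).memLp_rpow_mul hσ)

theorem coeFn_popPowSchwartzToLp (φ : evenSchwartz) : popPowSchwartzToLp s hσ φ
    =ᵐ[radMeasure c₁] fun x => ((x ^ a : ℝ) : ℂ) * conjugatedPop s (a + c₁) φ x :=
  MemLp.coeFn_toLp ((rapidlyDecaying_conjugatedPop s (a + c₁) φ.2).memLp_rpow_mul hσ)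

theorem powSchwartzToLp_injective : Function.Injective (powSchwartzToLp (c₁ := c₁) hσ) := by
  intro φ ψ h
  refine Subtype.ext (eq_of_even_of_eqOn_Ioi φ.2 ψ.2 ?_)
  exact eqOn_Ioi_of_rpow_mul_ae_eq φ.1.continuous.continuousOn ψ.1.continuous.continuousOn <|
    (coeFn_powSchwartzToLp hσ φ).symm.trans (h ▸ coeFn_powSchwartzToLp hσ ψ)

theorem inner_popPowSchwartzToLp_powSchwartzToLp (φ ψ : evenSchwartz) :
    ⟪popPowSchwartzToLp s hσ φ, powSchwartzToLp hσ ψ⟫_ℂ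
      = ⟪powSchwartzToLp hσ φ, popPowSchwartzToLp s hσ ψ⟫_ℂ := by
  have hφ := coeFn_powSchwartzToLp hσ φ
  have hψ := coeFn_powSchwartzToLp hσ ψ
  have hPφ := coeFn_popPowSchwartzToLp (s := s) hσ φ
  have hPψ := coeFn_popPowSchwartzToLp (s := s) hσ ψ
  have hintφ := integrableOn_rpow_mul_conj_mul hPφ hψ
  have hintψ := integrableOn_rpow_mul_conj_mul hφ hPψ
  rw [inner_eq_integral_rpow_mul_conj_mul hPφ hψ, inner_eq_integral_rpow_mul_conj_mul hφ hPψ,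
    ← sub_eq_zero, ← integral_sub hintφ hintψ]
  refine (rapidlyDecaying_weightedWronskian (a + c₁) φ.2 ψ.2).integral_deriv_eq_zero (by linarith)
    (fun x hx => ?_) (hintφ.sub hintψ)
  simpa only [mul_sub] using hasDerivAt_weightedWronskian s (a + c₁) φ.1 ψ.1 hx

/-- The operator `P` with domain `x^a 𝒮_ev`, as a partially defined operator on
`L²((0,∞), x^{2c₁} dx)`. -/
noncomputable def radialOperator (s : ℝ) (hσ : -1 / 2 < a + c₁) :
    Lp ℂ 2 (radMeasure c₁) →ₗ.[ℂ] Lp ℂ 2 (radMeasure c₁) where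
  domain := LinearMap.range (powSchwartzToLp hσ)
  toFun := popPowSchwartzToLp s hσ ∘ₗ
    (LinearEquiv.ofInjective _ (powSchwartzToLp_injective hσ)).symm

theorem powSchwartzToLp_mem_domain (φ : evenSchwartz) :
    powSchwartzToLp hσ φ ∈ (radialOperator s hσ).domain :=
  ⟨φ, rfl⟩

theorem radialOperator_powSchwartzToLp (φ : evenSchwartz) :
    radialOperator s hσ ⟨powSchwartzToLp hσ φ, powSchwartzToLp_mem_domain hσ φ⟩
      = popPowSchwartzToLp s hσ φ :=
  congrArg (popPowSchwartzToLp s hσ) ((LinearEquiv.symm_apply_eq _).2 rfl)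

theorem radialOperator_isFormalAdjoint :
    (radialOperator s hσ).IsFormalAdjoint (radialOperator s hσ) := by
  rintro ⟨_, φ, rfl⟩ ⟨_, ψ, rfl⟩
  rw [radialOperator_powSchwartzToLp, radialOperator_powSchwartzToLp]
  exact inner_popPowSchwartzToLp_powSchwartzToLp hσ φ ψ

theorem coe_domain_radialOperator :
    ((radialOperator s hσ).domain : Set (Lp ℂ 2 (radMeasure c₁))) = Dset a c₁ := by
  ext u
  constructor
  · rintro ⟨φ, rfl⟩
    exact ⟨φ, φ.2, coeFn_powSchwartzToLp hσ φ⟩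
  · rintro ⟨φ, hφ, hu⟩
    exact ⟨⟨φ, hφ⟩, Lp.ext ((coeFn_powSchwartzToLp hσ ⟨φ, hφ⟩).trans hu.symm)⟩

theorem coeFn_radialOperator {c₂ : ℝ} (ha : a ^ 2 + (2 * c₁ - 1) * a - c₂ = 0)
    {u : Lp ℂ 2 (radMeasure c₁)} (hu : u ∈ (radialOperator s hσ).domain) {φ : SchwartzMap ℝ ℂ}
    (hφ : φ ∈ evenSchwartz) (huφ : u =ᵐ[radMeasure c₁] powSchwartz a φ) :
    radialOperator s hσ ⟨u, hu⟩ =ᵐ[radMeasure c₁] Pop s c₁ c₂ (powSchwartz a φ) := by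
  obtain rfl : powSchwartzToLp hσ ⟨φ, hφ⟩ = u :=
    Lp.ext ((coeFn_powSchwartzToLp hσ ⟨φ, hφ⟩).trans huφ.symm)
  rw [radialOperator_powSchwartzToLp]
  filter_upwards [coeFn_popPowSchwartzToLp hσ ⟨φ, hφ⟩, ae_radMeasure_mem_Ioi c₁] with x hx hpos
  rw [hx, Pop_powSchwartz s ha φ hpos]

end RadialOperator

section Moments

open Filter Set FourierTransform
open scoped Nat

variable {E : Type*} [NormedAddCommGroup E]

section EvenExtension

variable {g : ℝ → E}

theorem integrable_comp_abs_of_integrableOn_Ioi (hg : IntegrableOn g (Ioi 0)) :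
    Integrable fun x : ℝ => g |x| := by
  have hpos : IntegrableOn (fun x : ℝ => g |x|) (Ioi 0) :=
    hg.congr_fun (fun x hx => by rw [abs_of_pos hx]) measurableSet_Ioi
  have hneg : IntegrableOn (fun x : ℝ => g |x|) (Iic 0) := by
    rw [integrableOn_Iic_iff_integrableOn_Iio]
    have h : IntegrableOn (fun x => g |x|) (Ioi (-0)) := by rwa [neg_zero]
    simpa only [abs_neg] using h.comp_neg_Iio
  rw [← integrableOn_univ, ← Iic_union_Ioi]
  exact hneg.union hpos

variable [NormedSpace ℝ E]

theorem integral_comp_abs_eq_two_smul (hg : IntegrableOn g (Ioi 0)) :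
    ∫ x : ℝ, g |x| = (2 : ℝ) • ∫ x in Ioi (0 : ℝ), g x := by
  have hpos : ∫ x in Ioi (0 : ℝ), g |x| = ∫ x in Ioi (0 : ℝ), g x :=
    setIntegral_congr_fun measurableSet_Ioi fun x hx => by rw [abs_of_pos hx]
  have hneg : ∫ x in Iic (0 : ℝ), g |x| = ∫ x in Ioi (0 : ℝ), g |x| := by
    simpa only [abs_neg, neg_zero] using integral_comp_neg_Iic 0 fun x => g |x|
  rw [← integral_add_compl measurableSet_Iic (integrable_comp_abs_of_integrableOn_Ioi hg),
    compl_Iic, hneg, hpos, two_smul]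

theorem integral_eq_zero_of_odd (hg : ∀ x, g (-x) = -g x) : ∫ x, g x = 0 := by
  have h := integral_neg_eq_self g volume
  simp only [hg, integral_neg] at h
  have := IsAddTorsionFree.of_isTorsionFree ℝ E
  exact self_eq_neg.1 h.symm

end EvenExtension

variable [NormedSpace ℂ E]

theorem ae_eq_zero_of_fourier_eq_zero [CompleteSpace E] {V : Type*} [NormedAddCommGroup V]
    [InnerProductSpace ℝ V] [FiniteDimensional ℝ V] [MeasurableSpace V] [BorelSpace V] {G : V → E}
    (hG : Integrable G) (h : ∀ w, 𝓕 G w = 0) : ∀ᵐ x, G x = 0 := by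
  refine ae_eq_zero_of_integral_contDiff_smul_eq_zero hG.locallyIntegrable fun g hg hg' => ?_
  have hsupp : HasCompactSupport (Complex.ofRealCLM ∘ g) := hg'.comp_left rfl
  let ψ : SchwartzMap V ℂ := hsupp.toSchwartzMap (Complex.ofRealCLM.contDiff.comp hg)
  let f : SchwartzMap V ℂ := 𝓕⁻ ψ
  have hf : 𝓕 (f : V → ℂ) = ψ := by
    rw [← SchwartzMap.fourier_coe, FourierTransform.fourier_fourierInv_eq]
  have hself : ∫ x, 𝓕 (f : V → ℂ) x • G x = ∫ w, f w • 𝓕 G w := by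
    simpa using! VectorFourier.integral_fourierIntegral_smul_eq_flip (L := innerₗ V)
      (μ := volume) (ν := volume) Real.continuous_fourierChar continuous_inner f.integrable hG
  simp only [hf, h, smul_zero, integral_zero] at hself
  exact hself

theorem integral_cexp_smul_eq_zero_of_moments_eq_zero {G : ℝ → E}
    (hG : ∀ t : ℝ, Integrable fun x => Real.exp (t * |x|) • G x)
    (hmoment : ∀ n : ℕ, ∫ x : ℝ, (x : ℂ) ^ n • G x = 0) (c : ℂ) :
    ∫ x : ℝ, Complex.exp (c * x) • G x = 0 := by
  have hG₀ : Integrable G := by simpa using hG 0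
  have hterm (n : ℕ) : ∫ x : ℝ, ((c * x) ^ n / n !) • G x = 0 := by
    have : ∀ x : ℝ, ((c * x) ^ n / n !) • G x = (c ^ n / n !) • (x : ℂ) ^ n • G x := fun x => by
      rw [smul_smul]
      ring_nf
    simp only [this, integral_smul, hmoment, smul_zero]
  have hsum := hasSum_integral_of_dominated_convergence (μ := volume)
    (F := fun (n : ℕ) (x : ℝ) => ((c * x) ^ n / n !) • G x)
    (f := fun x : ℝ => Complex.exp (c * x) • G x)
    (fun n x => ((‖c‖ * |x|) ^ n / n !) * ‖G x‖) ?_ ?_ ?_ ?_ ?_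
  · exact hsum.unique (by simpa only [hterm] using hasSum_zero)
  · exact fun n => (Continuous.aestronglyMeasurable (by fun_prop)).smul hG₀.1
  · exact fun n => .of_forall fun x => by simp [norm_smul]
  · exact .of_forall fun x => (Real.summable_pow_div_factorial _).mul_right _
  · refine (hG ‖c‖).norm.congr (.of_forall fun x => ?_)
    simp only [norm_smul, Real.norm_eq_abs, Real.abs_exp, tsum_mul_right]
    rw [Real.exp_eq_exp_ℝ, NormedSpace.exp_eq_tsum_div]
  · refine .of_forall fun x => HasSum.smul_const ?_ _
    rw [Complex.exp_eq_exp_ℂ]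
    exact NormedSpace.expSeries_div_hasSum_exp (c * x)

theorem ae_eq_zero_of_moments_eq_zero [CompleteSpace E] {G : ℝ → E}
    (hG : ∀ t : ℝ, Integrable fun x => Real.exp (t * |x|) • G x)
    (hmoment : ∀ n : ℕ, ∫ x : ℝ, (x : ℂ) ^ n • G x = 0) : ∀ᵐ x : ℝ, G x = 0 := by
  refine ae_eq_zero_of_fourier_eq_zero (by simpa using hG 0) fun w => ?_
  rw [Real.fourier_eq', ← integral_cexp_smul_eq_zero_of_moments_eq_zero hG hmoment
    (-(2 * Real.pi * w) * Complex.I)]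
  refine integral_congr_ae (.of_forall fun x => ?_)
  simp only [Real.inner_apply]
  push_cast
  ring_nf

theorem integrableOn_pow_smul_of_integrableOn_exp_smul {G : ℝ → E}
    (hG : ∀ t : ℝ, IntegrableOn (fun x => Real.exp (t * x) • G x) (Ioi 0)) (n : ℕ) :
    IntegrableOn (fun x : ℝ => (x : ℂ) ^ n • G x) (Ioi 0) := by
  have hG₀ : IntegrableOn G (Ioi 0) := by simpa using hG 0
  refine ((hG 1).norm.const_mul (n ! : ℝ)).mono'
    ((Continuous.aestronglyMeasurable (by fun_prop)).smul hG₀.1) ?_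
  filter_upwards [ae_restrict_mem measurableSet_Ioi] with x hx
  have hexp : x ^ n ≤ n ! * Real.exp x :=
    (div_le_iff₀' (by positivity)).1 (Real.pow_div_factorial_le_exp x hx.le n)
  simp only [norm_smul, norm_pow, Complex.norm_real, Real.norm_eq_abs, Real.abs_exp, one_mul,
    abs_of_pos hx.out, ← mul_assoc]
  gcongr

theorem ae_eq_zero_of_even_moments_Ioi_eq_zero [CompleteSpace E] {G : ℝ → E}
    (hG : ∀ t : ℝ, IntegrableOn (fun x => Real.exp (t * x) • G x) (Ioi 0))
    (hmoment : ∀ k : ℕ, ∫ x in Ioi (0 : ℝ), (x : ℂ) ^ (2 * k) • G x = 0) :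
    ∀ᵐ x ∂volume.restrict (Ioi (0 : ℝ)), G x = 0 := by
  -- The even extension of `G` has vanishing odd moments.
  have hext : ∀ᵐ x : ℝ, G |x| = 0 := by
    refine ae_eq_zero_of_moments_eq_zero (G := fun x => G |x|)
      (fun t => integrable_comp_abs_of_integrableOn_Ioi (hG t)) fun n => ?_
    rcases n.even_or_odd with ⟨k, rfl⟩ | hn
    · have h := integral_comp_abs_eq_two_smul
        (integrableOn_pow_smul_of_integrableOn_exp_smul hG (2 * k))
      rw [hmoment, smul_zero] at h
      simpa only [← Complex.ofReal_pow, (even_two_mul k).pow_abs, ← two_mul] using h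
    · refine integral_eq_zero_of_odd fun x => ?_
      rw [abs_neg, Complex.ofReal_neg, hn.neg_pow, neg_smul]
  filter_upwards [ae_restrict_of_ae hext, ae_restrict_mem measurableSet_Ioi] with x hx hpos
  rwa [abs_of_pos hpos] at hx

end Moments

section Completeness

open Filter Set Polynomial

variable {s a c₁ : ℝ}

/-- The even Schwartz function `q(x²) e^{-sx²/2}`, linearly in the polynomial `q`. -/
noncomputable def evenPolyGaussian (hs : 0 < s) : ℂ[X] →ₗ[ℂ] evenSchwartz where
  toFun q := ⟨polyGaussianSchwartz hs (expand ℂ 2 q), fun x => by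
    simp [polyGaussianSchwartz_apply, polyGaussian, expand_eval]⟩
  map_add' p q := by
    ext x
    simp [polyGaussianSchwartz_apply, polyGaussian, add_mul]
  map_smul' c q := by
    ext x
    simp [polyGaussianSchwartz_apply, polyGaussian, expand_eval, mul_assoc]

theorem evenPolyGaussian_apply (hs : 0 < s) (q : ℂ[X]) (x : ℝ) :
    (evenPolyGaussian hs q).1 x = q.eval ((x : ℂ) ^ 2) * (Real.exp (-(s / 2) * x ^ 2) : ℝ) := by
  rw [← expand_eval]
  rfl

theorem evenPolyGaussian_injective (hs : 0 < s) : Function.Injective (evenPolyGaussian hs) := by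
  refine (injective_iff_map_eq_zero _).2 fun q hq => ?_
  have hroot (n : ℕ) : q.eval ((n : ℂ) ^ 2) = 0 := by
    have h := evenPolyGaussian_apply hs q n
    rw [hq, eq_comm] at h
    simpa using (mul_eq_zero.1 h).resolve_right (by exact_mod_cast (Real.exp_pos _).ne')
  refine eq_zero_of_infinite_isRoot q <| (infinite_range_of_injective
    (f := fun n : ℕ => (n : ℂ) ^ 2) fun m n h => ?_).mono (range_subset_iff.2 hroot)
  dsimp only at h
  exact Nat.pow_left_injective two_ne_zero (by dsimp only; exact_mod_cast h)

theorem conjugatedPop_evenPolyGaussian (hs : 0 < s) (σ : ℝ) (q : ℂ[X]) {x : ℝ} (hx : x ≠ 0) :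
    conjugatedPop s σ (evenPolyGaussian hs q).1 x
      = (evenPolyGaussian hs (laguerreOp (s : ℂ) (σ : ℂ) q)).1 x := by
  have hx' : (x : ℂ) ≠ 0 := by exact_mod_cast hx
  have h := congrArg (eval (x : ℂ)) (X_mul_expand_laguerreOp (s : ℂ) (σ : ℂ) q)
  simp only [eval_add, eval_sub, eval_mul, eval_neg, eval_X, eval_C, eval_pow] at h
  change conjugatedPop s σ (polyGaussianSchwartz hs _) x = polyGaussianSchwartz hs _ x
  simp only [conjugatedPop_apply, derivCLM_polyGaussianSchwartz, polyGaussianSchwartz_apply,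
    polyGaussian]
  refine mul_left_cancel₀ hx' ?_
  rw [← mul_assoc (x : ℂ) (eval _ _), h]
  push_cast
  field_simp

theorem popPowSchwartzToLp_evenPolyGaussian (hs : 0 < s) (hσ : -1 / 2 < a + c₁) (q : ℂ[X]) :
    popPowSchwartzToLp s hσ (evenPolyGaussian hs q) = powSchwartzToLp hσ
      (evenPolyGaussian hs (laguerreOp (s : ℂ) ((a + c₁ : ℝ) : ℂ) q)) := by
  refine Lp.ext ((coeFn_popPowSchwartzToLp hσ _).trans
    (EventuallyEq.trans ?_ (coeFn_powSchwartzToLp hσ _).symm))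
  filter_upwards [ae_radMeasure_mem_Ioi c₁] with x hx
  rw [conjugatedPop_evenPolyGaussian hs _ q (ne_of_gt hx), powSchwartz]

theorem rapidlyDecaying_exp_quadratic {b : ℝ} (hb : b < 0) (t : ℝ) :
    RapidlyDecaying 0 fun x : ℝ => ((Real.exp (b * x ^ 2 + t * x) : ℝ) : ℂ) where
  continuousOn := by fun_prop
  isBigO_zero := by
    have hcont : Continuous fun x : ℝ => ((Real.exp (b * x ^ 2 + t * x) : ℝ) : ℂ) := by fun_prop
    simpa only [Real.rpow_zero] using
      (hcont.continuousAt.isBigO_one ℝ).mono nhdsWithin_le_nhds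
  isBigO_atTop r :=
    Complex.isBigO_ofReal_left.2 (rexp_neg_quadratic_isLittleO_rpow_atTop hb t r).isBigO

/-- The function `x^{2c₁ + a} e^{-sx²/2} f(x)`, whose even moments on `(0,∞)` are the inner products
of `f` with the functions `x^a x^{2k} e^{-sx²/2}` in `L²((0,∞), x^{2c₁} dx)`. -/
noncomputable def gaussianWeighted (s a c₁ : ℝ) (f : ℝ → ℂ) : ℝ → ℂ := fun x =>
  x ^ (2 * c₁) • (((x ^ a : ℝ) : ℂ) * (Real.exp (-(s / 2) * x ^ 2) : ℝ) * f x)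

theorem integrableOn_exp_smul_gaussianWeighted (hs : 0 < s) (hσ : -1 / 2 < a + c₁)
    (f : Lp ℂ 2 (radMeasure c₁)) (t : ℝ) :
    IntegrableOn (fun x => Real.exp (t * x) • gaussianWeighted s a c₁ f x) (Ioi 0) := by
  have hgauss := (rapidlyDecaying_exp_quadratic (b := -(s / 2)) (by linarith) t).memLp_rpow_mul hσ
  refine (integrable_radMeasure_iff.1 (hgauss.integrable_mul (Lp.memLp f))).congr
    (.of_forall fun x => ?_)
  simp only [gaussianWeighted, Pi.mul_apply, Real.exp_add, Complex.real_smul]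
  push_cast
  ring

theorem inner_powSchwartzToLp_evenPolyGaussian_X_pow (hs : 0 < s) (hσ : -1 / 2 < a + c₁)
    (f : Lp ℂ 2 (radMeasure c₁)) (k : ℕ) :
    ⟪powSchwartzToLp hσ (evenPolyGaussian hs (X ^ k)), f⟫_ℂ
      = ∫ x in Ioi (0 : ℝ), (x : ℂ) ^ (2 * k) • gaussianWeighted s a c₁ f x := by
  rw [L2.inner_def, integral_radMeasure]
  have hcoe := coeFn_powSchwartzToLp hσ (evenPolyGaussian hs (X ^ k))
  rw [EventuallyEq, ae_radMeasure] at hcoe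
  refine integral_congr_ae ?_
  filter_upwards [hcoe] with x hx
  rw [hx, powSchwartz, evenPolyGaussian_apply]
  simp only [gaussianWeighted, RCLike.inner_apply, map_mul, map_pow, Complex.conj_ofReal, eval_pow,
    eval_X, pow_mul, Complex.real_smul, smul_eq_mul]
  ring

theorem eq_zero_of_inner_evenPolyGaussian_eq_zero (hs : 0 < s) (hσ : -1 / 2 < a + c₁)
    {f : Lp ℂ 2 (radMeasure c₁)}
    (hf : ∀ q : ℂ[X], ⟪powSchwartzToLp hσ (evenPolyGaussian hs q), f⟫_ℂ = 0) : f = 0 := by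
  have hzero := ae_eq_zero_of_even_moments_Ioi_eq_zero
    (integrableOn_exp_smul_gaussianWeighted hs hσ f)
    fun k => (inner_powSchwartzToLp_evenPolyGaussian_X_pow hs hσ f k).symm.trans (hf _)
  rw [Lp.eq_zero_iff_ae_eq_zero, EventuallyEq, ae_radMeasure]
  filter_upwards [hzero, ae_restrict_mem measurableSet_Ioi] with x hx hpos
  have hpow (b : ℝ) : x ^ b ≠ 0 := (Real.rpow_pos_of_pos hpos b).ne'
  simpa [gaussianWeighted, hpow, Real.exp_ne_zero] using hx

theorem exists_hasEigenbasis_radialOperator (hs : 0 < s) (hσ : -1 / 2 < a + c₁) :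
    ∃ χ : HilbertBasis ℕ ℂ (Lp ℂ 2 (radMeasure c₁)), HasEigenbasis (radialOperator s hσ) χ
      fun k => ((laguerreEigenvalue s (a + c₁) k : ℝ) : ℂ) := by
  have hs' : (s : ℂ) ≠ 0 := by exact_mod_cast hs.ne'
  choose q hdeg hq using exists_laguerreOp_eigenpolynomial hs' ((a + c₁ : ℝ) : ℂ)
  have hq₀ (k) : q k ≠ 0 := fun h => by simpa [h] using hdeg k
  have hspan : Submodule.span ℂ (Set.range q) = ⊤ :=
    (Polynomial.Sequence.mk q hdeg).span fun k => (leadingCoeff_ne_zero.2 (hq₀ k)).isUnit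
  let w : ℂ[X] →ₗ[ℂ] Lp ℂ 2 (radMeasure c₁) := powSchwartzToLp hσ ∘ₗ evenPolyGaussian hs
  have hw : Function.Injective w :=
    (powSchwartzToLp_injective hσ).comp (evenPolyGaussian_injective hs)
  refine exists_hasEigenbasis (radialOperator_isFormalAdjoint hσ)
    (Complex.ofReal_injective.comp (laguerreEigenvalue_injective hs.ne' _)) (w := fun k => w (q k))
    (fun k => powSchwartzToLp_mem_domain hσ _) (fun k => ?_) (fun k => ?_) (fun f hf => ?_)
  · have hcast : ((laguerreEigenvalue s (a + c₁) k : ℝ) : ℂ)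
        = laguerreEigenvalue (s : ℂ) ((a + c₁ : ℝ) : ℂ) k := by
      simp [laguerreEigenvalue]
    rw [hcast, ← map_smul, ← hq]
    exact (radialOperator_powSchwartzToLp hσ _).trans
      (popPowSchwartzToLp_evenPolyGaussian hs hσ (q k))
  · exact (map_ne_zero_iff w hw).2 (hq₀ k)
  · have hker : Submodule.span ℂ (Set.range q) ≤ ((ℂ ∙ f)ᗮ).comap w :=
      Submodule.span_le.2 <| range_subset_iff.2 fun k =>
        Submodule.mem_orthogonal_singleton_iff_inner_left.2 (hf k)
    exact eq_zero_of_inner_evenPolyGaussian_eq_zero hs hσ fun p =>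
      Submodule.mem_orthogonal_singleton_iff_inner_left.1 (hker (hspan ▸ Submodule.mem_top))

end Completeness

/-- Let `s > 0`, and let `a` satisfy `a² + (2c₁-1)a - c₂ = 0` with
`σ := a + c₁ > -1/2`. Then the operator `P = -d²/dρ² + s²ρ² - 2c₁ρ⁻¹ d/dρ + c₂ρ⁻²` with
domain `𝒟 = ρ^a 𝒮_{ev,+}` is densely defined and symmetric in `L²((0,∞), ρ^{2c₁}dρ)`, is
essentially self-adjoint, and has a Hilbert basis of eigenfunctions with (simple)
eigenvalues `(4k + 1 + 2σ)s`, `k ∈ ℕ`, which exhaust the eigenvalues of its closure. -/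
theorem statement0 (s c₁ c₂ a : ℝ) (hs : 0 < s)
    (ha : a ^ 2 + (2 * c₁ - 1) * a - c₂ = 0) (hσ : -1/2 < a + c₁) :
    ∃ T : Lp ℂ 2 (radMeasure c₁) →ₗ.[ℂ] Lp ℂ 2 (radMeasure c₁),
      -- `T` is the operator `P` with domain `𝒟`:
      (T.domain : Set (Lp ℂ 2 (radMeasure c₁))) = Dset a c₁ ∧
      (∀ (u : Lp ℂ 2 (radMeasure c₁)) (hu : u ∈ T.domain) (φ : SchwartzMap ℝ ℂ),
        IsEvenSchwartz φ → (u : ℝ → ℂ) =ᵐ[radMeasure c₁] powSchwartz a φ →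
        (T ⟨u, hu⟩ : ℝ → ℂ) =ᵐ[radMeasure c₁] Pop s c₁ c₂ (powSchwartz a φ)) ∧
      -- (i) `𝒟` is dense, `P` is symmetric (it maps `𝒟` into `H` since `T` does), and
      -- `P` is essentially self-adjoint: its closure is self-adjoint
      Dense (T.domain : Set (Lp ℂ 2 (radMeasure c₁))) ∧
      (∀ x y : T.domain,
        ⟪T x, (y : Lp ℂ 2 (radMeasure c₁))⟫_ℂ = ⟪(x : Lp ℂ 2 (radMeasure c₁)), T y⟫_ℂ) ∧
      T.closure.adjoint = T.closure ∧
      -- (ii) Hilbert basis of eigenvectors in `𝒟` with eigenvalues `(4k+1+2σ)s`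
      (∃ (χ : HilbertBasis ℕ ℂ (Lp ℂ 2 (radMeasure c₁)))
          (hχ : ∀ k : ℕ, χ k ∈ T.domain),
          ∀ k : ℕ, T ⟨χ k, hχ k⟩ =
            ((((4 * k + 1 + 2 * (a + c₁)) * s : ℝ)) : ℂ) • χ k) ∧
      -- every eigenvalue of the closure is of this form, with multiplicity one
      (∀ μeig : ℂ,
        (∃ (u : Lp ℂ 2 (radMeasure c₁)) (hu : u ∈ T.closure.domain),
            u ≠ 0 ∧ T.closure ⟨u, hu⟩ = μeig • u) →
        (∃ k : ℕ, μeig = ((((4 * k + 1 + 2 * (a + c₁)) * s : ℝ)) : ℂ)) ∧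
        (∀ (u v : Lp ℂ 2 (radMeasure c₁)) (hu : u ∈ T.closure.domain)
            (hv : v ∈ T.closure.domain), u ≠ 0 →
            T.closure ⟨u, hu⟩ = μeig • u → T.closure ⟨v, hv⟩ = μeig • v →
            ∃ z : ℂ, v = z • u)) := by
  obtain ⟨χ, hχ⟩ := exists_hasEigenbasis_radialOperator hs hσ
  have hsymm := radialOperator_isFormalAdjoint (s := s) hσ
  have hclosure := hχ.mono (radialOperator s hσ).le_closure
  have hclosure_symm := hχ.closure_isFormalAdjoint hsymm
  have hinj := Complex.ofReal_injective.comp (laguerreEigenvalue_injective hs.ne' (a + c₁))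
  refine ⟨radialOperator s hσ, coe_domain_radialOperator hσ,
    fun u hu φ hφ huφ => coeFn_radialOperator hσ ha hu hφ huφ, hχ.dense_domain, hsymm,
    hχ.adjoint_closure_eq_closure hsymm, ⟨χ, hχ.mem_domain, hχ.apply_eq⟩, fun m hm => ⟨?_, ?_⟩⟩
  · obtain ⟨u, hu, hu₀, hum⟩ := hm
    exact hclosure.exists_eigenvalue_eq hclosure_symm (u := ⟨u, hu⟩) hu₀ hum
  · intro u v hu hv hu₀ hum hvm
    exact hclosure.exists_eq_smul hclosure_symm hinj (u := ⟨u, hu⟩) (v := ⟨v, hv⟩) hu₀ hum hvm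
end

section
/- Let H be an infinite-dimensional separable complex Hilbert space and let D be a self-adjoint densely defined operator on H. Then the following are equivalent: (i) there exist a Hilbert basis (e_n)_{n∈ℕ} of H and real numbers (μ_n)_{n∈ℕ} with e_n ∈ dom D and D e_n = μ_n e_n for all n, and |μ_n| → ∞ as n → ∞; (ii) the set { u ∈ dom D : ‖u‖² + ‖Du‖² ≤ 1 } is relatively compact in H. -/
open scoped InnerProductSpace
open Filter Topology

/-!
Let `G` be the graph of `D` with its Hilbert space norm and `A : G → H`, `(u, D u) ↦ u`. Condition
(ii) says precisely that `A` is a compact operator.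

If `D` has an eigenbasis with `|μₙ| → ∞`, then `‖A - Pₙ A‖ ≤ 1 / inf_{k ≥ n} |μ_k|`, where `Pₙ`
projects onto the span of the first `n` eigenvectors, so `A` is a limit of finite rank operators.

Conversely `A A† = (1 + D²)⁻¹` is then compact, symmetric and injective, so its eigenspaces for
nonzero eigenvalues span a dense subspace. On each of them `D² = ν²` for some real `ν`, hence it is
contained in `ker (D - ν) + ker (D + ν)`, and `H` is the Hilbert sum of the eigenspaces of `D`.
Finally, the eigenvectors of norm one with `|μ| ≤ C` lie in the image under `A` of a ball; being at
distance `√2` from one another in a relatively compact set, they are finite in number.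
-/

theorem countable_of_tendsto_cofinite_atTop {ι α : Type*} [Preorder α] [NoMaxOrder α]
    [(atTop : Filter α).IsCountablyGenerated] {f : ι → α} (hf : Tendsto f cofinite atTop) :
    Countable ι := by
  have hker : (atTop : Filter α).ker = ∅ := by
    refine Set.eq_empty_of_forall_notMem fun a ha => ?_
    exact (Filter.mem_ker.1 ha (Set.Ioi a) (Ioi_mem_atTop a)).false
  have hcount := hf.countable_compl_preimage_ker
  rwa [hker, Set.preimage_empty, Set.compl_empty, Set.countable_univ_iff] at hcount

theorem mem_graph_iff_exists_apply_eq {R M N : Type*} [Ring R] [AddCommGroup M] [Module R M]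
    [AddCommGroup N] [Module R N] {D : M →ₗ.[R] N} {x : M} {y : N} :
    (x, y) ∈ D.graph ↔ ∃ hx : x ∈ D.domain, D ⟨x, hx⟩ = y := by
  rw [D.mem_graph_iff]
  constructor
  · rintro ⟨u, rfl, rfl⟩
    exact ⟨u.2, rfl⟩
  · exact fun ⟨hx, hy⟩ => ⟨⟨x, hx⟩, rfl, hy⟩

section Eigenspace

variable {R M : Type*} [CommRing R] [AddCommGroup M] [Module R M]

/-- The eigenspace `ker (D - μ)` of an unbounded operator, as a subspace of the ambient space: the
condition `(u, μ u) ∈ D.graph` encodes both `u ∈ dom D` and `D u = μ u`. -/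
def unboundedEigenspace (D : M →ₗ.[R] M) (μ : R) : Submodule R M :=
  D.graph.comap (LinearMap.id.prod (μ • LinearMap.id))

theorem mem_unboundedEigenspace_iff {D : M →ₗ.[R] M} {μ : R} {x : M} :
    x ∈ unboundedEigenspace D μ ↔ ∃ hx : x ∈ D.domain, D ⟨x, hx⟩ = μ • x :=
  mem_graph_iff_exists_apply_eq

theorem isClosed_unboundedEigenspace [TopologicalSpace M] [ContinuousConstSMul R M]
    {D : M →ₗ.[R] M} (hD : D.IsClosed) (μ : R) : IsClosed (unboundedEigenspace D μ : Set M) :=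
  IsClosed.preimage (f := fun x : M => (x, μ • x)) (by fun_prop) hD

theorem mem_sup_unboundedEigenspace_neg_of_apply_apply_eq {K : Type*} [Field K] [NeZero (2 : K)]
    [Module K M] {D : M →ₗ.[K] M} {ν : K} (hν : ν ≠ 0) {x y : M} (hxy : (x, y) ∈ D.graph)
    (hyx : (y, ν ^ 2 • x) ∈ D.graph) :
    x ∈ unboundedEigenspace D ν ⊔ unboundedEigenspace D (-ν) := by
  have hpos : ν • x + y ∈ unboundedEigenspace D ν := by
    change (ν • x + y, ν • (ν • x + y)) ∈ D.graph
    have := D.graph.add_mem (D.graph.smul_mem ν hxy) hyx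
    convert this using 1
    simp only [Prod.smul_mk, Prod.mk_add_mk, Prod.mk.injEq, true_and]
    module
  have hneg : ν • x - y ∈ unboundedEigenspace D (-ν) := by
    change (ν • x - y, -ν • (ν • x - y)) ∈ D.graph
    have := D.graph.sub_mem (D.graph.smul_mem ν hxy) hyx
    convert this using 1
    simp only [Prod.smul_mk, Prod.mk_sub_mk, Prod.mk.injEq, true_and]
    module
  have hx : x = (2 * ν)⁻¹ • ((ν • x + y) + (ν • x - y)) := by
    rw [eq_inv_smul_iff₀ (mul_ne_zero two_ne_zero hν)]
    module
  rw [hx]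
  exact Submodule.smul_mem _ _ (Submodule.add_mem_sup hpos hneg)

end Eigenspace

section HilbertBasis

variable {𝕜 E ι κ : Type*} [RCLike 𝕜] [NormedAddCommGroup E] [InnerProductSpace 𝕜 E]

theorem norm_sub_eq_sqrt_two_of_orthonormal {e : ι → E} (he : Orthonormal 𝕜 e) {i j : ι}
    (hij : i ≠ j) : ‖e i - e j‖ = √2 := by
  rw [← Real.sqrt_sq (norm_nonneg _), @norm_sub_sq 𝕜, he.1 i, he.1 j, he.2 hij]
  norm_num

theorem finite_of_orthonormal_of_totallyBounded_range {e : ι → E} (he : Orthonormal 𝕜 e)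
    (htb : TotallyBounded (Set.range e)) : Finite ι := by
  obtain ⟨t, htfin, hcover⟩ := Metric.totallyBounded_iff.1 htb (1 / 2) (by norm_num)
  have : Finite t := htfin
  have hnear : ∀ i, ∃ y : t, dist (e i) y < 1 / 2 := fun i => by
    simpa using hcover (Set.mem_range_self i)
  choose center hcenter using hnear
  refine Finite.of_injective center fun i j hij => ?_
  by_contra hne
  have hlt : dist (e i) (e j) < 1 := by
    have := dist_triangle_right (e i) (e j) (center i)
    have := hcenter i
    have := hij ▸ hcenter j
    linarith
  rw [dist_eq_norm, norm_sub_eq_sqrt_two_of_orthonormal he hne] at hlt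
  exact (Real.one_lt_sqrt_two.trans hlt).false

theorem hasSum_sq_norm_inner (e : HilbertBasis ι 𝕜 E) (x : E) :
    HasSum (fun i => ‖⟪e i, x⟫_𝕜‖ ^ 2) (‖x‖ ^ 2) := by
  simpa [e.repr_apply_apply] using lp.hasSum_norm (p := 2) (by norm_num) (e.repr x)

theorem mul_norm_sub_sum_inner_smul_le (e : HilbertBasis ι 𝕜 E) {μ : ι → 𝕜} {x y : E}
    (hxy : ∀ i, ⟪e i, y⟫_𝕜 = μ i * ⟪e i, x⟫_𝕜) {s : Finset ι} {C : ℝ} (hC : 0 ≤ C)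
    (hs : ∀ i ∉ s, C ≤ ‖μ i‖) : C * ‖x - ∑ i ∈ s, ⟪e i, x⟫_𝕜 • e i‖ ≤ ‖y‖ := by
  set r := x - ∑ i ∈ s, ⟪e i, x⟫_𝕜 • e i with hr
  have hcoeff : ∀ i, C * ‖⟪e i, r⟫_𝕜‖ ≤ ‖⟪e i, y⟫_𝕜‖ := fun i => by
    rw [hr, inner_sub_right]
    by_cases hi : i ∈ s
    · rw [e.orthonormal.inner_right_sum _ hi, sub_self, norm_zero, mul_zero]
      exact norm_nonneg _
    · have hzero : ⟪e i, ∑ j ∈ s, ⟪e j, x⟫_𝕜 • e j⟫_𝕜 = 0 := by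
        rw [inner_sum]
        refine Finset.sum_eq_zero fun j hj => ?_
        rw [inner_smul_right, e.orthonormal.2 (ne_of_mem_of_not_mem hj hi).symm, mul_zero]
      rw [hzero, sub_zero, hxy, norm_mul]
      exact mul_le_mul_of_nonneg_right (hs i hi) (norm_nonneg _)
  refine le_of_sq_le_sq ?_ (norm_nonneg y)
  rw [mul_pow]
  refine hasSum_le (fun i => ?_) ((hasSum_sq_norm_inner e r).mul_left _) (hasSum_sq_norm_inner e y)
  rw [← mul_pow]
  exact pow_le_pow_left₀ (by positivity) (hcoeff i) 2

theorem exists_hilbertBasis_reindex [CompleteSpace E] (e : HilbertBasis ι 𝕜 E) (f : κ ≃ ι) :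
    ∃ b : HilbertBasis κ 𝕜 E, ∀ k, b k = e (f k) := by
  have hdense : ⊤ ≤ (Submodule.span 𝕜 (Set.range (e ∘ f))).topologicalClosure := by
    rw [f.surjective.range_comp, e.dense_span]
  refine ⟨HilbertBasis.mk (e.orthonormal.comp f f.injective) hdense, fun k => ?_⟩
  rw [HilbertBasis.coe_mk, Function.comp_apply]

theorem isCompactOperator_sum_rankOne {F : Type*} [NormedAddCommGroup F] [InnerProductSpace 𝕜 F]
    (s : Finset ι) (x : ι → E) (y : ι → F) :
    IsCompactOperator (∑ i ∈ s, InnerProductSpace.rankOne 𝕜 (x i) (y i) : F →L[𝕜] E) := by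
  refine sum_mem (S := compactOperator (RingHom.id 𝕜) F E) fun i _ => ?_
  exact (isCompactOperator_of_locallyCompactSpace_dom (innerSL 𝕜 (y i))).clm_comp
    (ContinuousLinearMap.toSpanSingleton 𝕜 (x i))

theorem infinite_of_hilbertBasis (e : HilbertBasis ι 𝕜 E) (hinf : ¬ FiniteDimensional 𝕜 E) :
    Infinite ι := by
  by_contra hfin
  rw [not_infinite_iff_finite] at hfin
  have := Fintype.ofFinite ι
  exact hinf e.toOrthonormalBasis.toBasis.finiteDimensional_of_finite

theorem exists_hilbertBasis_mem_of_orthogonalFamily [CompleteSpace E] {V : ι → Submodule 𝕜 E}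
    [∀ i, CompleteSpace (V i)] (hV : OrthogonalFamily 𝕜 (fun i => V i) fun i => (V i).subtypeₗᵢ)
    (hbot : (⨆ i, V i)ᗮ = ⊥) :
    ∃ (w : ∀ i, Set (V i)) (e : HilbertBasis (Σ i, w i) 𝕜 E), ∀ a, e a ∈ V a.1 := by
  choose w b _ using fun i => exists_hilbertBasis 𝕜 (V i)
  have horth := hV.orthonormal_sigma_orthonormal fun i => (b i).orthonormal
  have hspan : (Submodule.span 𝕜 (Set.range fun a : Σ i, w i => (b a.1 a.2 : E)))ᗮ = ⊥ := by
    rw [eq_bot_iff, ← hbot, ← Submodule.iInf_orthogonal]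
    refine fun x hx => (Submodule.mem_iInf _).2 fun i => ?_
    rw [← Submodule.orthogonalProjectionOnto_eq_zero_iff, ← (b i).repr.map_eq_zero_iff]
    ext k
    rw [(b i).repr_apply_apply, (V i).inner_orthogonalProjectionOnto_eq_of_mem_left]
    exact hx _ (Submodule.subset_span ⟨⟨i, k⟩, rfl⟩)
  exact ⟨w, HilbertBasis.mkOfOrthogonalEqBot horth hspan, fun a => by simp⟩

end HilbertBasis

section GraphSpace

variable {𝕜 E F : Type*} [RCLike 𝕜] [NormedAddCommGroup E] [InnerProductSpace 𝕜 E]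
  [NormedAddCommGroup F] [InnerProductSpace 𝕜 F]

/-- The graph of an unbounded operator as an inner product space, with squared norm
`‖u‖² + ‖D u‖²`. -/
def graphSpace (D : E →ₗ.[𝕜] F) : Submodule 𝕜 (WithLp 2 (E × F)) :=
  D.graph.comap (WithLp.linearEquiv 2 𝕜 (E × F)).toLinearMap

/-- The map `(u, D u) ↦ u` from the graph space of `D` to the ambient space: the inclusion of the
domain of `D`, bounded for the graph norm. -/
noncomputable def domainInclusion (D : E →ₗ.[𝕜] F) : graphSpace D →L[𝕜] E :=
  WithLp.fstL 2 𝕜 E F ∘L (graphSpace D).subtypeL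

variable {D : E →ₗ.[𝕜] F}

theorem completeSpace_graphSpace [CompleteSpace E] [CompleteSpace F] (hD : D.IsClosed) :
    CompleteSpace (graphSpace D) :=
  (IsClosed.preimage (WithLp.prod_continuous_ofLp 2 E F) hD).completeSpace_coe

theorem image_domainInclusion_closedBall {r : ℝ} (hr : 0 ≤ r) :
    domainInclusion D '' Metric.closedBall 0 r =
      {u : E | ∃ hu : u ∈ D.domain, ‖u‖ ^ 2 + ‖D ⟨u, hu⟩‖ ^ 2 ≤ r ^ 2} := by
  have hball : ∀ g : graphSpace D, g ∈ Metric.closedBall 0 r ↔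
      ‖(g : WithLp 2 (E × F)).fst‖ ^ 2 + ‖(g : WithLp 2 (E × F)).snd‖ ^ 2 ≤ r ^ 2 := fun g => by
    rw [mem_closedBall_zero_iff, ← WithLp.prod_norm_sq_eq_of_L2, sq_le_sq₀ (norm_nonneg _) hr,
      Submodule.coe_norm]
  ext u
  constructor
  · rintro ⟨g, hg, rfl⟩
    obtain ⟨hu, hDu⟩ : ∃ hu : domainInclusion D g ∈ D.domain,
        D ⟨_, hu⟩ = (g : WithLp 2 (E × F)).snd := mem_graph_iff_exists_apply_eq.1 g.2
    exact ⟨hu, hDu ▸ (hball g).1 hg⟩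
  · rintro ⟨hu, hle⟩
    exact ⟨⟨WithLp.toLp 2 (u, D ⟨u, hu⟩), D.mem_graph ⟨u, hu⟩⟩, (hball _).2 hle, rfl⟩

theorem isCompactOperator_domainInclusion_iff :
    IsCompactOperator (domainInclusion D) ↔
      IsCompact (closure {u : E | ∃ hu : u ∈ D.domain, ‖u‖ ^ 2 + ‖D ⟨u, hu⟩‖ ^ 2 ≤ 1}) := by
  have himage := image_domainInclusion_closedBall (D := D) zero_le_one
  rw [one_pow] at himage
  rw [← himage]
  exact isCompactOperator_iff_isCompact_closure_image_closedBall
    (domainInclusion D : graphSpace D →ₗ[𝕜] E) one_pos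

theorem inner_eq_inner_of_mem_graph {S : F →ₗ.[𝕜] E} (hDS : D.IsFormalAdjoint S) {x y' : E}
    {x' y : F} (hx : (x, x') ∈ D.graph) (hy : (y, y') ∈ S.graph) : ⟪x', y⟫_𝕜 = ⟪x, y'⟫_𝕜 := by
  obtain ⟨u, rfl, rfl⟩ := D.mem_graph_iff.1 hx
  obtain ⟨v, rfl, rfl⟩ := S.mem_graph_iff.1 hy
  exact hDS u v

theorem range_domainInclusion : (domainInclusion D).range = D.domain := by
  ext u
  constructor
  · rintro ⟨g, rfl⟩
    exact D.mem_domain_of_mem_graph g.2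
  · exact fun hu => ⟨⟨WithLp.toLp 2 (u, D ⟨u, hu⟩), D.mem_graph ⟨u, hu⟩⟩, rfl⟩

variable [CompleteSpace E] [CompleteSpace (graphSpace D)]

theorem ker_domainInclusion_comp_adjoint (hD : Dense (D.domain : Set E)) :
    (domainInclusion D ∘L (domainInclusion D).adjoint).ker = ⊥ := by
  rw [ContinuousLinearMap.ker_self_comp_adjoint, ← ContinuousLinearMap.orthogonal_range,
    range_domainInclusion, ← Submodule.orthogonal_closure,
    Submodule.dense_iff_topologicalClosure_eq_top.1 hD, Submodule.top_orthogonal_eq_bot]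

/-- `A A† = (1 + D† D)⁻¹` for the inclusion `A` of the domain: `x` is mapped to some `u` with
`D† (D u) = x - u`. -/
theorem adjoint_domainInclusion_mem_graph_adjoint (hD : Dense (D.domain : Set E)) (x : E) :
    (((domainInclusion D).adjoint x : WithLp 2 (E × F)).snd,
      x - ((domainInclusion D).adjoint x : WithLp 2 (E × F)).fst) ∈ D.adjoint.graph := by
  rw [LinearPMap.adjoint_graph_eq_graph_adjoint hD, Submodule.mem_adjoint_iff]
  intro a b hab
  let g : graphSpace D := ⟨WithLp.toLp 2 (a, b), hab⟩
  have hadj := (domainInclusion D).adjoint_inner_right g x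
  rw [Submodule.coe_inner, WithLp.prod_inner_apply] at hadj
  change ⟪a, _⟫_𝕜 + ⟪b, _⟫_𝕜 = ⟪a, x⟫_𝕜 at hadj
  rw [inner_sub_right, ← hadj]
  exact sub_eq_zero.2 (add_sub_cancel_left _ _).symm

end GraphSpace

section Spectral

variable {𝕜 E ι : Type*} [RCLike 𝕜] [NormedAddCommGroup E] [InnerProductSpace 𝕜 E]
  {D : E →ₗ.[𝕜] E}

theorem orthogonalFamily_unboundedEigenspace (hD : D.IsFormalAdjoint D) :
    OrthogonalFamily 𝕜 (fun μ : ℝ => unboundedEigenspace D (μ : 𝕜))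
      fun μ => (unboundedEigenspace D (μ : 𝕜)).subtypeₗᵢ := by
  intro μ ν hμν x y
  have h : (μ : 𝕜) * ⟪(x : E), y⟫_𝕜 = ν * ⟪(x : E), y⟫_𝕜 := by
    simpa [inner_smul_left, inner_smul_right] using inner_eq_inner_of_mem_graph hD x.2 y.2
  have hμν' : (μ : 𝕜) ≠ ν := RCLike.ofReal_injective.ne hμν
  exact (mul_eq_mul_right_iff.1 h).resolve_left hμν'

theorem mem_iSup_unboundedEigenspace_of_apply_apply_eq (hD : D.IsFormalAdjoint D) {x y : E} {c : 𝕜}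
    (hxy : (x, y) ∈ D.graph) (hyx : (y, c • x) ∈ D.graph) :
    x ∈ ⨆ μ : ℝ, unboundedEigenspace D (μ : 𝕜) := by
  have hle : ∀ μ : ℝ, unboundedEigenspace D (μ : 𝕜) ≤ ⨆ μ : ℝ, unboundedEigenspace D (μ : 𝕜) :=
    le_iSup fun μ : ℝ => unboundedEigenspace D (μ : 𝕜)
  rcases eq_or_ne x 0 with rfl | hx
  · exact zero_mem _
  rcases eq_or_ne y 0 with rfl | hy
  · refine hle 0 ?_
    rw [mem_unboundedEigenspace_iff, ← mem_graph_iff_exists_apply_eq]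
    simpa using hxy
  have hx' : (‖x‖ : 𝕜) ≠ 0 := by simpa using hx
  have hc : c = ((‖y‖ / ‖x‖ : ℝ) : 𝕜) ^ 2 := by
    have hnorm := inner_eq_inner_of_mem_graph hD hxy hyx
    rw [inner_smul_right, inner_self_eq_norm_sq_to_K, inner_self_eq_norm_sq_to_K] at hnorm
    rw [RCLike.ofReal_div, div_pow, eq_div_iff (pow_ne_zero 2 hx'), hnorm]
  have hν : ((‖y‖ / ‖x‖ : ℝ) : 𝕜) ≠ 0 :=
    RCLike.ofReal_ne_zero.2 (div_ne_zero (norm_ne_zero_iff.2 hy) (norm_ne_zero_iff.2 hx))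
  have hsup := mem_sup_unboundedEigenspace_neg_of_apply_apply_eq hν hxy (hc ▸ hyx)
  rw [← RCLike.ofReal_neg] at hsup
  exact sup_le (hle _) (hle _) hsup

theorem norm_domainInclusion_sub_sum_rankOne_comp_le (hD : D.IsFormalAdjoint D)
    (e : HilbertBasis ι 𝕜 E) {μ : ι → ℝ} (he : ∀ i, e i ∈ unboundedEigenspace D (μ i : 𝕜))
    {s : Finset ι} {C : ℝ} (hC : 0 < C) (hs : ∀ i ∉ s, C ≤ |μ i|) :
    ‖domainInclusion D -
      (∑ i ∈ s, InnerProductSpace.rankOne 𝕜 (e i) (e i)) ∘L domainInclusion D‖ ≤ C⁻¹ := by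
  refine ContinuousLinearMap.opNorm_le_bound _ (inv_nonneg.2 hC.le) fun g => ?_
  have hcoeff (i : ι) :
      ⟪e i, (g : WithLp 2 (E × E)).snd⟫_𝕜 = μ i * ⟪e i, domainInclusion D g⟫_𝕜 := by
    have h := inner_eq_inner_of_mem_graph hD (he i) g.2
    change ⟪(μ i : 𝕜) • e i, _⟫_𝕜 = _ at h
    rw [inner_smul_left, RCLike.conj_ofReal] at h
    exact h.symm
  have hmul := mul_norm_sub_sum_inner_smul_le e hcoeff hC.le fun i hi =>
    (hs i hi).trans_eq (RCLike.norm_ofReal (μ i)).symm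
  rw [← div_eq_inv_mul, le_div_iff₀' hC]
  simpa using hmul.trans (WithLp.norm_snd_le _ g.1)

theorem isCompactOperator_domainInclusion_of_hilbertBasis [CompleteSpace E]
    (hD : D.IsFormalAdjoint D) (e : HilbertBasis ι 𝕜 E) {μ : ι → ℝ}
    (he : ∀ i, e i ∈ unboundedEigenspace D (μ i : 𝕜))
    (hμ : Tendsto (fun i => |μ i|) cofinite atTop) : IsCompactOperator (domainInclusion D) := by
  refine isClosed_setOfPred_isCompactOperator.closure_subset
    ((SeminormedAddCommGroup.mem_closure_iff (E := graphSpace D →L[𝕜] E)).2 fun ε hε => ?_)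
  obtain ⟨C, hC⟩ := exists_gt ε⁻¹
  have hC0 : 0 < C := (inv_pos.2 hε).trans hC
  have hfin : {i | ¬ C ≤ |μ i|}.Finite := hμ.eventually_ge_atTop C
  have hcompact := (isCompactOperator_sum_rankOne (𝕜 := 𝕜) hfin.toFinset e e).comp_clm
    (domainInclusion D)
  have hle := norm_domainInclusion_sub_sum_rankOne_comp_le hD e he (s := hfin.toFinset) hC0
    fun i hi => by simpa using hi
  exact ⟨_ ∘L domainInclusion D, hcompact, hle.trans_lt (inv_lt_of_inv_lt₀ hε hC)⟩

theorem tendsto_abs_eigenvalue_cofinite_atTop (hD : IsCompactOperator (domainInclusion D))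
    {e : ι → E} (he : Orthonormal 𝕜 e) {μ : ι → ℝ}
    (hμ : ∀ i, e i ∈ unboundedEigenspace D (μ i : 𝕜)) :
    Tendsto (fun i => |μ i|) cofinite atTop := by
  refine tendsto_atTop.2 fun C => ?_
  have hsubset : Set.range (fun i : {i | ¬ C ≤ |μ i|} => e i) ⊆
      domainInclusion D '' Metric.closedBall 0 √(1 + C ^ 2) := by
    rw [image_domainInclusion_closedBall (Real.sqrt_nonneg _), Real.sq_sqrt (by positivity)]
    rintro _ ⟨⟨i, hi⟩, rfl⟩
    obtain ⟨hmem, happly⟩ := mem_unboundedEigenspace_iff.1 (hμ i)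
    refine ⟨hmem, ?_⟩
    rw [happly, norm_smul, he.1 i, mul_one, one_pow, RCLike.norm_ofReal]
    gcongr
    exact (not_le.1 hi).le
  have htb := (hD.isCompact_closure_image_closedBall √(1 + C ^ 2)).totallyBounded.subset
    (hsubset.trans subset_closure)
  exact finite_of_orthonormal_of_totallyBounded_range (he.comp _ Subtype.val_injective) htb

variable [CompleteSpace E]

theorem isFormalAdjoint_of_isSelfAdjoint (hD : IsSelfAdjoint D) : D.IsFormalAdjoint D := by
  have h := LinearPMap.adjoint_isFormalAdjoint hD.dense_domain
  rwa [LinearPMap.isSelfAdjoint_def.1 hD] at h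

theorem orthogonal_iSup_unboundedEigenspace_eq_bot (hD : IsSelfAdjoint D)
    (hc : IsCompactOperator (domainInclusion D)) :
    (⨆ μ : ℝ, unboundedEigenspace D (μ : 𝕜))ᗮ = ⊥ := by
  have := completeSpace_graphSpace hD.isClosed
  let T : E →L[𝕜] E := domainInclusion D ∘L (domainInclusion D).adjoint
  have hT : IsCompactOperator T := hc.comp_clm _
  have hsymm : T.IsSymmetric :=
    (ContinuousLinearMap.isPositive_self_comp_adjoint (domainInclusion D)).isSymmetric
  rw [eq_bot_iff, ← ContinuousLinearMap.orthogonalComplement_iSup_eigenspaces_eq_bot hT hsymm]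
  refine Submodule.orthogonal_le (iSup_le fun c x hx => ?_)
  have hTx : T x = c • x := Module.End.mem_eigenspace_iff.1 hx
  rcases eq_or_ne c 0 with rfl | hc0
  · have hker : x ∈ T.ker := by simpa using hTx
    rw [ker_domainInclusion_comp_adjoint hD.dense_domain, Submodule.mem_bot] at hker
    exact hker ▸ zero_mem _
  let g := (domainInclusion D).adjoint x
  have hg : (c • x, (g : WithLp 2 (E × E)).snd) ∈ D.graph := hTx ▸ g.2
  have hg' : ((g : WithLp 2 (E × E)).snd, x - c • x) ∈ D.graph := by
    have h := adjoint_domainInclusion_mem_graph_adjoint hD.dense_domain x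
    rw [LinearPMap.isSelfAdjoint_def.1 hD] at h
    exact hTx ▸ h
  refine mem_iSup_unboundedEigenspace_of_apply_apply_eq
    (y := c⁻¹ • (g : WithLp 2 (E × E)).snd) (c := c⁻¹ - 1)
    (isFormalAdjoint_of_isSelfAdjoint hD) ?_ ?_
  · simpa [hc0] using D.graph.smul_mem c⁻¹ hg
  · simpa [smul_sub, sub_smul, hc0] using D.graph.smul_mem c⁻¹ hg'

theorem exists_hilbertBasis_mem_unboundedEigenspace (hD : IsSelfAdjoint D)
    (hc : IsCompactOperator (domainInclusion D)) (hinf : ¬ FiniteDimensional 𝕜 E) :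
    ∃ (e : HilbertBasis ℕ 𝕜 E) (μ : ℕ → ℝ), ∀ n, e n ∈ unboundedEigenspace D (μ n : 𝕜) := by
  have (μ : ℝ) : CompleteSpace (unboundedEigenspace D (μ : 𝕜)) :=
    (isClosed_unboundedEigenspace hD.isClosed _).completeSpace_coe
  obtain ⟨w, e, he⟩ := exists_hilbertBasis_mem_of_orthogonalFamily
    (orthogonalFamily_unboundedEigenspace (isFormalAdjoint_of_isSelfAdjoint hD))
    (orthogonal_iSup_unboundedEigenspace_eq_bot hD hc)
  have hcountable : Countable (Σ μ : ℝ, w μ) :=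
    countable_of_tendsto_cofinite_atTop (tendsto_abs_eigenvalue_cofinite_atTop hc e.orthonormal he)
  have := infinite_of_hilbertBasis e hinf
  obtain ⟨_⟩ := nonempty_denumerable (Σ μ : ℝ, w μ)
  obtain ⟨b, hb⟩ := exists_hilbertBasis_reindex e (Denumerable.eqv (Σ μ : ℝ, w μ)).symm
  exact ⟨b, _, fun n => hb n ▸ he _⟩

end Spectral

theorem statement3_general {𝕜 H : Type*} [RCLike 𝕜] [NormedAddCommGroup H] [InnerProductSpace 𝕜 H]
    [CompleteSpace H] (hinf : ¬ FiniteDimensional 𝕜 H) (D : H →ₗ.[𝕜] H) (hD : IsSelfAdjoint D) :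
    (∃ (e : HilbertBasis ℕ 𝕜 H) (μ : ℕ → ℝ) (he : ∀ n : ℕ, e n ∈ D.domain),
        (∀ n : ℕ, D ⟨e n, he n⟩ = (μ n : 𝕜) • e n) ∧
        Tendsto (fun n => |μ n|) atTop atTop) ↔
      IsCompact (closure {u : H | ∃ hu : u ∈ D.domain, ‖u‖ ^ 2 + ‖D ⟨u, hu⟩‖ ^ 2 ≤ 1}) := by
  rw [← isCompactOperator_domainInclusion_iff, ← Nat.cofinite_eq_atTop]
  constructor
  · rintro ⟨e, μ, he, happly, hμ⟩
    exact isCompactOperator_domainInclusion_of_hilbertBasis (isFormalAdjoint_of_isSelfAdjoint hD) e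
      (fun n => mem_unboundedEigenspace_iff.2 ⟨he n, happly n⟩) hμ
  · intro hc
    obtain ⟨e, μ, he⟩ := exists_hilbertBasis_mem_unboundedEigenspace hD hc hinf
    choose hmem happly using fun n => mem_unboundedEigenspace_iff.1 (he n)
    exact ⟨e, μ, hmem, happly, tendsto_abs_eigenvalue_cofinite_atTop hc e.orthonormal he⟩

/-- For a self-adjoint densely defined operator `D` on an
infinite-dimensional separable complex Hilbert space `H`, the following are equivalent:
(i) there is a Hilbert basis of eigenvectors of `D` whose eigenvalues `μₙ` satisfy
`|μₙ| → ∞`; (ii) the set `{ u ∈ dom D : ‖u‖² + ‖Du‖² ≤ 1 }` is relatively compact in `H`. -/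
theorem statement3 {H : Type*} [NormedAddCommGroup H] [InnerProductSpace ℂ H]
    [CompleteSpace H] [TopologicalSpace.SeparableSpace H]
    (hinf : ¬ FiniteDimensional ℂ H)
    (D : H →ₗ.[ℂ] H) (hdense : Dense (D.domain : Set H))
    (hsa : D.adjoint = D) :
    (∃ (e : HilbertBasis ℕ ℂ H) (μ : ℕ → ℝ) (he : ∀ n : ℕ, e n ∈ D.domain),
        (∀ n : ℕ, D ⟨e n, he n⟩ = (μ n : ℂ) • e n) ∧
        Tendsto (fun n => |μ n|) atTop atTop) ↔
      IsCompact (closure {u : H | ∃ hu : u ∈ D.domain, ‖u‖ ^ 2 + ‖D ⟨u, hu⟩‖ ^ 2 ≤ 1}) :=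
  statement3_general hinf D hsa
end

section
/- Let κ, s ∈ ℝ, ε ∈ {1,−1} and 0 < a < b, and let u₀, u₁ : ℝ × (0,b) → ℂ be smooth functions such that: (1) ∂_t u₀(t,ρ) = i(−∂_ρ u₁ − κρ^{−1}u₁ + εsρ u₁)(t,ρ) and ∂_t u₁(t,ρ) = i(∂_ρ u₀ − κρ^{−1}u₀ + εsρ u₀)(t,ρ) for all (t,ρ) ∈ ℝ × (0,b); (2) for every t ∈ ℝ, u₀(t,ρ)·conj(u₁(t,ρ)) → 0 as ρ → 0⁺; (3) for every compact interval I ⊂ ℝ there is a Lebesgue-integrable function g on (0,a) such that |u₀(t,ρ)|² + |u₁(t,ρ)|² ≤ g(ρ) and |∂_t(|u₀|² + |u₁|²)(t,ρ)| ≤ g(ρ) for all t ∈ I and ρ ∈ (0,a); (4) u₀(0,ρ) = u₁(0,ρ) = 0 for all ρ ∈ (0,a). Then u₀(t,ρ) = u₁(t,ρ) = 0 whenever |t| ≤ a and 0 < ρ < a − |t|. (Finite propagation speed, away from the cone tip, for the wave equation ∂_t u = iD u of the perturbed operator D = d + δ with d = ∂_ρ − κρ^{−1} + εsρ and δ = −∂_ρ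 − κρ^{−1} + εsρ.) -/
open MeasureTheory Set Complex Filter

/-
A solution carries the energy density `e = ‖u₀‖² + ‖u₁‖²` and the energy flux `f = -2 Im ⟪u₁, u₀⟫`.
The potential drops out of the energy balance because it is symmetric, leaving `∂ₜe = ∂_ρf`, and
`|f| ≤ e` by Cauchy–Schwarz: energy moves at speed at most one. Integrate `e` against `φ(t + ρ)`,
where `φ` is nonincreasing and vanishes on `[a, ∞)`. Integrating by parts in `ρ`, with no flux
through the tip, the time derivative of this weighted energy is `∫ φ'(t + ρ) (e - f) ≤ 0`. It starts
at `0`, so it vanishes for all `t ≥ 0`, and so does `e` wherever `φ(t + ρ) > 0`. Negative times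
follow by time reversal.
-/

open scoped Topology

/-- A conservation law `∂ₜe = ∂_ρf` on `ℝ × (0, a)` for a density `e` and a flux `f` with `|f| ≤ e`
(propagation speed at most one) and no flux through `ρ = 0`. The density and its time derivative are
dominated by an integrable function, locally uniformly in time. The time derivative of `e` is
encoded as `deriv (f t) ρ`. -/
structure CausalConservationLaw (a : ℝ) (e f : ℝ → ℝ → ℝ) : Prop where
  hasDerivAt_density : ∀ t, ∀ ρ ∈ Ioo 0 a, HasDerivAt (e · ρ) (deriv (f t) ρ) t
  differentiableAt_flux : ∀ t, ∀ ρ ∈ Ioo 0 a, DifferentiableAt ℝ (f t) ρ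
  continuousOn_density : ∀ t, ContinuousOn (e t) (Ioo 0 a)
  abs_flux_le : ∀ t, ∀ ρ ∈ Ioo 0 a, |f t ρ| ≤ e t ρ
  tendsto_flux : ∀ t, Tendsto (f t) (𝓝[>] 0) (𝓝 0)
  exists_bound : ∀ t₁ t₂ : ℝ, ∃ g : ℝ → ℝ, IntegrableOn g (Ioo 0 a) ∧
    ∀ t ∈ Icc t₁ t₂, ∀ ρ ∈ Ioo 0 a, e t ρ ≤ g ρ ∧ |deriv (f t) ρ| ≤ g ρ

/-- The energy at time `t` of a density `e` on `(0, a)`, weighted by a function `φ` of the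
characteristic coordinate `t + ρ`. -/
noncomputable def weightedEnergy (φ : ℝ → ℝ) (a : ℝ) (e : ℝ → ℝ → ℝ) (t : ℝ) : ℝ :=
  ∫ ρ in Ioo 0 a, φ (t + ρ) * e t ρ

theorem integrableOn_comp_add_mul {c d : ℝ} {ψ g : ℝ → ℝ} (hψ : Continuous ψ) (t : ℝ)
    (hg : IntegrableOn g (Ioo c d)) : IntegrableOn (fun ρ => ψ (t + ρ) * g ρ) (Ioo c d) :=
  hg.continuousOn_mul_of_subset (hψ.comp (continuous_const_add t)).continuousOn isCompact_Icc
    measurableSet_Ioo Ioo_subset_Icc_self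

namespace CausalConservationLaw

variable {a : ℝ} {e f : ℝ → ℝ → ℝ} {φ : ℝ → ℝ}

theorem timeReversal (h : CausalConservationLaw a e f) :
    CausalConservationLaw a (fun t => e (-t)) (fun t ρ => -f (-t) ρ) where
  hasDerivAt_density t ρ hρ := by
    simpa only [deriv.fun_neg, mul_neg_one, Function.comp_def] using
      (h.hasDerivAt_density (-t) ρ hρ).comp t (hasDerivAt_neg t)
  differentiableAt_flux t ρ hρ := (h.differentiableAt_flux (-t) ρ hρ).neg
  continuousOn_density t := h.continuousOn_density (-t)
  abs_flux_le t ρ hρ := by simpa only [abs_neg] using h.abs_flux_le (-t) ρ hρ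
  tendsto_flux t := by simpa only [neg_zero] using (h.tendsto_flux (-t)).neg
  exists_bound t₁ t₂ := by
    obtain ⟨g, hg, hbound⟩ := h.exists_bound (-t₂) (-t₁)
    refine ⟨g, hg, fun t ht ρ hρ => ?_⟩
    simpa only [deriv.fun_neg, abs_neg] using
      hbound (-t) ⟨neg_le_neg ht.2, neg_le_neg ht.1⟩ ρ hρ

theorem density_nonneg (h : CausalConservationLaw a e f) {t ρ : ℝ} (hρ : ρ ∈ Ioo 0 a) :
    0 ≤ e t ρ :=
  (abs_nonneg _).trans (h.abs_flux_le t ρ hρ)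

theorem integrableOn_density (h : CausalConservationLaw a e f) (t : ℝ) :
    IntegrableOn (e t) (Ioo 0 a) := by
  obtain ⟨g, hg, hbound⟩ := h.exists_bound t t
  refine hg.mono' ((h.continuousOn_density t).aestronglyMeasurable measurableSet_Ioo)
    (ae_restrict_of_forall_mem measurableSet_Ioo fun ρ hρ => ?_)
  rw [Real.norm_of_nonneg (h.density_nonneg hρ)]
  exact (hbound t ⟨le_rfl, le_rfl⟩ ρ hρ).1

theorem integrableOn_flux (h : CausalConservationLaw a e f) (t : ℝ) :
    IntegrableOn (f t) (Ioo 0 a) :=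
  have hcont : ContinuousOn (f t) (Ioo 0 a) := fun ρ hρ =>
    (h.differentiableAt_flux t ρ hρ).continuousAt.continuousWithinAt
  (h.integrableOn_density t).mono' (hcont.aestronglyMeasurable measurableSet_Ioo)
    (ae_restrict_of_forall_mem measurableSet_Ioo (h.abs_flux_le t))

theorem integrableOn_deriv_flux (h : CausalConservationLaw a e f) (t : ℝ) :
    IntegrableOn (deriv (f t)) (Ioo 0 a) := by
  obtain ⟨g, hg, hbound⟩ := h.exists_bound t t
  exact hg.mono' (measurable_deriv (f t)).aestronglyMeasurable
    (ae_restrict_of_forall_mem measurableSet_Ioo fun ρ hρ => (hbound t ⟨le_rfl, le_rfl⟩ ρ hρ).2)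

theorem exists_bound_deriv_mul_add_mul (h : CausalConservationLaw a e f) (hφ : ContDiff ℝ 1 φ)
    (t₁ t₂ : ℝ) : ∃ g : ℝ → ℝ, IntegrableOn g (Ioo 0 a) ∧ ∀ ρ ∈ Ioo 0 a, ∀ t ∈ Icc t₁ t₂,
      ‖deriv φ (t + ρ) * e t ρ + φ (t + ρ) * deriv (f t) ρ‖ ≤ g ρ := by
  obtain ⟨g, hg, hbound⟩ := h.exists_bound t₁ t₂
  obtain ⟨C, hC⟩ := (isCompact_Icc (a := t₁) (b := t₂ + a)).exists_bound_of_continuousOn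
    hφ.continuous.continuousOn
  obtain ⟨C', hC'⟩ := (isCompact_Icc (a := t₁) (b := t₂ + a)).exists_bound_of_continuousOn
    (hφ.continuous_deriv le_rfl).continuousOn
  refine ⟨fun ρ => (C' + C) * g ρ, hg.const_mul _, fun ρ hρ t ht => ?_⟩
  have htρ : t + ρ ∈ Icc t₁ (t₂ + a) := ⟨by linarith [ht.1, hρ.1], by linarith [ht.2, hρ.2]⟩
  have he : 0 ≤ e t ρ := h.density_nonneg hρ
  obtain ⟨hbe, hbf⟩ := hbound t ht ρ hρ
  calc ‖deriv φ (t + ρ) * e t ρ + φ (t + ρ) * deriv (f t) ρ‖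
      ≤ ‖deriv φ (t + ρ)‖ * e t ρ + ‖φ (t + ρ)‖ * |deriv (f t) ρ| := by
        simpa only [norm_mul, Real.norm_of_nonneg he, Real.norm_eq_abs] using
          norm_add_le (deriv φ (t + ρ) * e t ρ) (φ (t + ρ) * deriv (f t) ρ)
    _ ≤ C' * g ρ + C * g ρ := by
        gcongr
        exacts [(norm_nonneg _).trans (hC' _ htρ), hC' _ htρ, (norm_nonneg _).trans (hC _ htρ),
          hC _ htρ]
    _ = (C' + C) * g ρ := by ring

theorem hasDerivAt_weightedEnergy (h : CausalConservationLaw a e f) (hφ : ContDiff ℝ 1 φ) (t : ℝ) :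
    HasDerivAt (weightedEnergy φ a e)
      (∫ ρ in Ioo 0 a, (deriv φ (t + ρ) * e t ρ + φ (t + ρ) * deriv (f t) ρ)) t := by
  obtain ⟨g, hg, hdom⟩ := h.exists_bound_deriv_mul_add_mul hφ (t - 1) (t + 1)
  have hderiv : ∀ ρ ∈ Ioo 0 a, ∀ x ∈ Icc (t - 1) (t + 1),
      HasDerivAt (fun x => φ (x + ρ) * e x ρ)
        (deriv φ (x + ρ) * e x ρ + φ (x + ρ) * deriv (f x) ρ) x := fun ρ hρ x _ =>
    ((hφ.differentiable one_ne_zero (x + ρ)).hasDerivAt.comp_add_const x ρ).mul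
      (h.hasDerivAt_density x ρ hρ)
  exact (hasDerivAt_integral_of_dominated_loc_of_deriv_le
    (Icc_mem_nhds (by linarith) (by linarith))
    (Eventually.of_forall fun x =>
      (integrableOn_comp_add_mul hφ.continuous x (h.integrableOn_density x)).aestronglyMeasurable)
    (integrableOn_comp_add_mul hφ.continuous t (h.integrableOn_density t))
    ((integrableOn_comp_add_mul (hφ.continuous_deriv le_rfl) t (h.integrableOn_density t)).add
      (integrableOn_comp_add_mul hφ.continuous t
        (h.integrableOn_deriv_flux t))).aestronglyMeasurable
    (ae_restrict_of_forall_mem measurableSet_Ioo hdom) hg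
    (ae_restrict_of_forall_mem measurableSet_Ioo hderiv)).2

theorem integral_deriv_mul_flux_add_mul_deriv_flux_eq_zero (h : CausalConservationLaw a e f)
    (ha : 0 < a) (hφ : ContDiff ℝ 1 φ) (hφa : ∀ x, a ≤ x → φ x = 0) {t : ℝ} (ht : 0 < t) :
    ∫ ρ in Ioo 0 a, (deriv φ (t + ρ) * f t ρ + φ (t + ρ) * deriv (f t) ρ) = 0 := by
  have hint : IntervalIntegrable
      (fun ρ => deriv φ (t + ρ) * f t ρ + φ (t + ρ) * deriv (f t) ρ) volume 0 a :=
    (intervalIntegrable_iff_integrableOn_Ioo_of_le ha.le).2 <|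
      (integrableOn_comp_add_mul (hφ.continuous_deriv le_rfl) t (h.integrableOn_flux t)).add
        (integrableOn_comp_add_mul hφ.continuous t (h.integrableOn_deriv_flux t))
  have hderiv : ∀ ρ ∈ Ioo 0 a, HasDerivAt (fun ρ => φ (t + ρ) * f t ρ)
      (deriv φ (t + ρ) * f t ρ + φ (t + ρ) * deriv (f t) ρ) ρ := fun ρ hρ =>
    ((hφ.differentiable one_ne_zero (t + ρ)).hasDerivAt.comp_const_add t ρ).mul
      (h.differentiableAt_flux t ρ hρ).hasDerivAt
  have htip : Tendsto (fun ρ => φ (t + ρ) * f t ρ) (𝓝[>] 0) (𝓝 0) := by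
    have hφt : Tendsto (fun ρ => φ (t + ρ)) (𝓝[>] 0) (𝓝 (φ (t + 0))) :=
      ((hφ.continuous.comp (continuous_const_add t)).tendsto 0).mono_left nhdsWithin_le_nhds
    simpa only [mul_zero] using hφt.mul (h.tendsto_flux t)
  have hcone : Tendsto (fun ρ => φ (t + ρ) * f t ρ) (𝓝[<] a) (𝓝 0) := by
    refine tendsto_const_nhds.congr' ?_
    filter_upwards [mem_nhdsWithin_of_mem_nhds (Ioi_mem_nhds (show a - t < a by linarith))]
      with ρ hρ
    rw [hφa (t + ρ) (by linarith [mem_Ioi.1 hρ]), zero_mul]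
  rw [← integral_Ioc_eq_integral_Ioo, ← intervalIntegral.integral_of_le ha.le,
    intervalIntegral.integral_eq_sub_of_hasDerivAt_of_tendsto ha hderiv hint htip hcone, sub_zero]

theorem antitoneOn_weightedEnergy (h : CausalConservationLaw a e f) (ha : 0 < a)
    (hφ : ContDiff ℝ 1 φ) (hφ_anti : Antitone φ) (hφa : ∀ x, a ≤ x → φ x = 0) :
    AntitoneOn (weightedEnergy φ a e) (Ici 0) := by
  have hφ' : Continuous (deriv φ) := hφ.continuous_deriv le_rfl
  refine antitoneOn_of_hasDerivWithinAt_nonpos (convex_Ici 0)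
    (fun t _ => (h.hasDerivAt_weightedEnergy hφ t).continuousAt.continuousWithinAt)
    (fun t _ => (h.hasDerivAt_weightedEnergy hφ t).hasDerivWithinAt) fun t ht => ?_
  rw [interior_Ici] at ht
  calc ∫ ρ in Ioo 0 a, (deriv φ (t + ρ) * e t ρ + φ (t + ρ) * deriv (f t) ρ)
      ≤ ∫ ρ in Ioo 0 a, (deriv φ (t + ρ) * f t ρ + φ (t + ρ) * deriv (f t) ρ) := by
        have hdiv := integrableOn_comp_add_mul hφ.continuous t (h.integrableOn_deriv_flux t)
        refine setIntegral_mono_on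
          ((integrableOn_comp_add_mul hφ' t (h.integrableOn_density t)).add hdiv)
          ((integrableOn_comp_add_mul hφ' t (h.integrableOn_flux t)).add hdiv) measurableSet_Ioo
          fun ρ hρ => ?_
        gcongr ?_ + _
        exact mul_le_mul_of_nonpos_left (le_of_abs_le (h.abs_flux_le t ρ hρ)) hφ_anti.deriv_nonpos
    _ = 0 := h.integral_deriv_mul_flux_add_mul_deriv_flux_eq_zero ha hφ hφa ht

theorem density_eq_zero_of_nonneg (h : CausalConservationLaw a e f)
    (hinit : ∀ ρ ∈ Ioo 0 a, e 0 ρ = 0) {t ρ : ℝ} (ht : 0 ≤ t) (hρ : 0 < ρ) (hρt : ρ < a - t) :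
    e t ρ = 0 := by
  set φ : ℝ → ℝ := fun x => expNegInvGlue (a - x)
  have hφ : ContDiff ℝ 1 φ := expNegInvGlue.contDiff.comp (contDiff_const.sub contDiff_id)
  have hφ_anti : Antitone φ := fun x y hxy => expNegInvGlue.monotone (sub_le_sub_left hxy a)
  have hφa : ∀ x, a ≤ x → φ x = 0 := fun x hx => expNegInvGlue.zero_of_nonpos (sub_nonpos.2 hx)
  have henergy₀ : weightedEnergy φ a e 0 = 0 :=
    setIntegral_eq_zero_of_forall_eq_zero fun x hx => by rw [hinit x hx, mul_zero]
  have henergy : ∫ x in Ioo 0 a, φ (t + x) * e t x ≤ 0 :=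
    (h.antitoneOn_weightedEnergy (by linarith) hφ hφ_anti hφa self_mem_Ici ht ht).trans_eq henergy₀
  have hnonneg : ∀ x ∈ Ioo 0 a, 0 ≤ φ (t + x) * e t x := fun x hx =>
    mul_nonneg (expNegInvGlue.nonneg _) (h.density_nonneg hx)
  have hae : (fun x => φ (t + x) * e t x) =ᵐ[volume.restrict (Ioo 0 a)] 0 :=
    (setIntegral_eq_zero_iff_of_nonneg_ae (ae_restrict_of_forall_mem measurableSet_Ioo hnonneg)
      (integrableOn_comp_add_mul hφ.continuous t (h.integrableOn_density t))).1
      (henergy.antisymm (setIntegral_nonneg measurableSet_Ioo hnonneg))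
  have hcont : ContinuousOn (fun x => φ (t + x) * e t x) (Ioo 0 a) :=
    (hφ.continuous.comp (continuous_const_add t)).continuousOn.mul (h.continuousOn_density t)
  have hzero : φ (t + ρ) * e t ρ = 0 :=
    Measure.eqOn_open_of_ae_eq hae isOpen_Ioo hcont continuousOn_const ⟨hρ, by linarith⟩
  exact (mul_eq_zero.1 hzero).resolve_left (expNegInvGlue.pos_of_pos (by linarith)).ne'

theorem density_eq_zero (h : CausalConservationLaw a e f) (hinit : ∀ ρ ∈ Ioo 0 a, e 0 ρ = 0)
    {t ρ : ℝ} (hρ : 0 < ρ) (hρt : ρ < a - |t|) : e t ρ = 0 := by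
  rcases le_total 0 t with ht | ht
  · exact h.density_eq_zero_of_nonneg hinit ht hρ (by rwa [abs_of_nonneg ht] at hρt)
  · simpa only [neg_neg] using h.timeReversal.density_eq_zero_of_nonneg
      (by simpa only [neg_zero] using hinit) (neg_nonneg.2 ht) hρ (by rwa [abs_of_nonpos ht] at hρt)

end CausalConservationLaw

section WaveEquation

variable {E : Type*} [NormedAddCommGroup E] {u₀ u₁ : ℝ → ℝ → E} {t ρ : ℝ}

/-- The energy density of a pair `(u₀, u₁)`, conserved by the wave equation up to the flux
`energyFlux`. -/
noncomputable def energyDensity (u₀ u₁ : ℝ → ℝ → E) (t ρ : ℝ) : ℝ :=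
  ‖u₀ t ρ‖ ^ 2 + ‖u₁ t ρ‖ ^ 2

theorem energyDensity_eq_zero_iff : energyDensity u₀ u₁ t ρ = 0 ↔ u₀ t ρ = 0 ∧ u₁ t ρ = 0 := by
  simp only [energyDensity, add_eq_zero_iff_of_nonneg (sq_nonneg ‖u₀ t ρ‖) (sq_nonneg ‖u₁ t ρ‖),
    sq_eq_zero_iff, norm_eq_zero]

variable [InnerProductSpace ℂ E] {S : Set ℝ} {W : ℝ → ℝ → E →ₗ[ℂ] E}

/-- A pair `(u₀, u₁)`, differentiable in each variable separately on `ℝ × S`, that solves the wave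
equation `∂ₜu = i(d + δ)u` there, where `d = ∂_ρ + W` and `δ = -∂_ρ + W` for a potential `W`. -/
structure IsWaveSolutionOn (S : Set ℝ) (W : ℝ → ℝ → E →ₗ[ℂ] E) (u₀ u₁ : ℝ → ℝ → E) : Prop where
  differentiableAt_fst : ∀ t, ∀ ρ ∈ S, DifferentiableAt ℝ (u₀ t) ρ
  differentiableAt_snd : ∀ t, ∀ ρ ∈ S, DifferentiableAt ℝ (u₁ t) ρ
  hasDerivAt_fst : ∀ t, ∀ ρ ∈ S,
    HasDerivAt (u₀ · ρ) (I • (-deriv (u₁ t) ρ + W t ρ (u₁ t ρ))) t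
  hasDerivAt_snd : ∀ t, ∀ ρ ∈ S,
    HasDerivAt (u₁ · ρ) (I • (deriv (u₀ t) ρ + W t ρ (u₀ t ρ))) t

/-- The energy flux of a pair `(u₀, u₁)`, signed so that the energy balance of the wave equation
reads `∂ₜe = ∂_ρf`. -/
noncomputable def energyFlux (u₀ u₁ : ℝ → ℝ → E) (t ρ : ℝ) : ℝ :=
  -2 * (inner ℂ (u₁ t ρ) (u₀ t ρ)).im

theorem hasDerivAt_norm_sq_of_I_smul {u : ℝ → E} {v : E} {t : ℝ} (h : HasDerivAt u (I • v) t) :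
    HasDerivAt (fun x => ‖u x‖ ^ 2) (-2 * (inner ℂ (u t) v).im) t := by
  let : InnerProductSpace ℝ E := .rclikeToReal ℂ E
  refine (HasDerivAt.norm_sq h).congr_deriv ?_
  rw [real_inner_eq_re_inner ℂ, inner_smul_right, RCLike.re_eq_complex_re, I_mul_re]
  ring

theorem abs_energyFlux_le_energyDensity : |energyFlux u₀ u₁ t ρ| ≤ energyDensity u₀ u₁ t ρ := by
  calc |energyFlux u₀ u₁ t ρ| = 2 * |(inner ℂ (u₁ t ρ) (u₀ t ρ)).im| := by
        rw [energyFlux, abs_mul, abs_neg, abs_two]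
    _ ≤ 2 * (‖u₁ t ρ‖ * ‖u₀ t ρ‖) := by
        gcongr
        exact (abs_im_le_norm _).trans (norm_inner_le_norm _ _)
    _ ≤ ‖u₀ t ρ‖ ^ 2 + ‖u₁ t ρ‖ ^ 2 := by
        linarith [two_mul_le_add_sq ‖u₁ t ρ‖ ‖u₀ t ρ‖]

namespace IsWaveSolutionOn

theorem mono {S' : Set ℝ} (h : IsWaveSolutionOn S' W u₀ u₁) (hS : S ⊆ S') :
    IsWaveSolutionOn S W u₀ u₁ where
  differentiableAt_fst t ρ hρ := h.differentiableAt_fst t ρ (hS hρ)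
  differentiableAt_snd t ρ hρ := h.differentiableAt_snd t ρ (hS hρ)
  hasDerivAt_fst t ρ hρ := h.hasDerivAt_fst t ρ (hS hρ)
  hasDerivAt_snd t ρ hρ := h.hasDerivAt_snd t ρ (hS hρ)

theorem of_differentiableOn (hS : IsOpen S)
    (hu₀ : DifferentiableOn ℝ (fun p : ℝ × ℝ => u₀ p.1 p.2) (univ ×ˢ S))
    (hu₁ : DifferentiableOn ℝ (fun p : ℝ × ℝ => u₁ p.1 p.2) (univ ×ˢ S))
    (heq₀ : ∀ t, ∀ ρ ∈ S,
      deriv (u₀ · ρ) t = I • (-deriv (u₁ t) ρ + W t ρ (u₁ t ρ)))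
    (heq₁ : ∀ t, ∀ ρ ∈ S,
      deriv (u₁ · ρ) t = I • (deriv (u₀ t) ρ + W t ρ (u₀ t ρ))) :
    IsWaveSolutionOn S W u₀ u₁ := by
  have hdiff {u : ℝ → ℝ → E}
      (hu : DifferentiableOn ℝ (fun p : ℝ × ℝ => u p.1 p.2) (univ ×ˢ S)) (t ρ : ℝ) (hρ : ρ ∈ S) :
      DifferentiableAt ℝ (u · ρ) t ∧ DifferentiableAt ℝ (u t) ρ := by
    have h : DifferentiableAt ℝ (fun p : ℝ × ℝ => u p.1 p.2) (t, ρ) :=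
      hu.differentiableAt ((isOpen_univ.prod hS).mem_nhds ⟨mem_univ t, hρ⟩)
    exact ⟨h.comp (f := fun x : ℝ => (x, ρ)) t (by fun_prop),
      h.comp (f := fun x : ℝ => (t, x)) ρ (by fun_prop)⟩
  exact
    { differentiableAt_fst := fun t ρ hρ => (hdiff hu₀ t ρ hρ).2
      differentiableAt_snd := fun t ρ hρ => (hdiff hu₁ t ρ hρ).2
      hasDerivAt_fst := fun t ρ hρ => heq₀ t ρ hρ ▸ (hdiff hu₀ t ρ hρ).1.hasDerivAt
      hasDerivAt_snd := fun t ρ hρ => heq₁ t ρ hρ ▸ (hdiff hu₁ t ρ hρ).1.hasDerivAt }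

theorem hasDerivAt_energyFlux (h : IsWaveSolutionOn S W u₀ u₁) (hρ : ρ ∈ S) :
    HasDerivAt (energyFlux u₀ u₁ t)
      (-2 * (inner ℂ (u₁ t ρ) (deriv (u₀ t) ρ) + inner ℂ (deriv (u₁ t) ρ) (u₀ t ρ)).im) ρ :=
  (imCLM.hasFDerivAt.comp_hasDerivAt ρ
    ((h.differentiableAt_snd t ρ hρ).hasDerivAt.inner ℂ
      (h.differentiableAt_fst t ρ hρ).hasDerivAt)).const_mul (-2)

theorem hasDerivAt_energyDensity (h : IsWaveSolutionOn S W u₀ u₁)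
    (hW : (W t ρ).IsSymmetric) (hρ : ρ ∈ S) :
    HasDerivAt (energyDensity u₀ u₁ · ρ) (deriv (energyFlux u₀ u₁ t) ρ) t := by
  have hderiv := (hasDerivAt_norm_sq_of_I_smul (h.hasDerivAt_fst t ρ hρ)).add
    (hasDerivAt_norm_sq_of_I_smul (h.hasDerivAt_snd t ρ hρ))
  refine hderiv.congr_deriv ?_
  have hpotential : (inner ℂ (u₀ t ρ) (W t ρ (u₁ t ρ))).im
      + (inner ℂ (u₁ t ρ) (W t ρ (u₀ t ρ))).im = 0 := by
    rw [← hW (u₁ t ρ), ← inner_conj_symm (W t ρ (u₁ t ρ)), conj_im, add_neg_cancel]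
  have hflux : (inner ℂ (deriv (u₁ t) ρ) (u₀ t ρ)).im
      = -(inner ℂ (u₀ t ρ) (deriv (u₁ t) ρ)).im := by
    rw [← inner_conj_symm, conj_im]
  rw [(h.hasDerivAt_energyFlux hρ).deriv, inner_add_right, inner_add_right, inner_neg_right]
  simp only [add_im, neg_im]
  linarith

theorem continuousOn_energyDensity (h : IsWaveSolutionOn S W u₀ u₁) :
    ContinuousOn (energyDensity u₀ u₁ t) S := fun ρ hρ =>
  (((h.differentiableAt_fst t ρ hρ).continuousAt.norm.pow 2).add
    ((h.differentiableAt_snd t ρ hρ).continuousAt.norm.pow 2)).continuousWithinAt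

end IsWaveSolutionOn

theorem statement17_general {a : ℝ} (hsol : IsWaveSolutionOn (Ioo 0 a) W u₀ u₁)
    (hW : ∀ t, ∀ ρ ∈ Ioo 0 a, (W t ρ).IsSymmetric)
    (hbd : ∀ t, Tendsto (fun ρ => (inner ℂ (u₁ t ρ) (u₀ t ρ)).im) (𝓝[>] 0) (𝓝 0))
    (hdom : ∀ t₁ t₂ : ℝ, ∃ g : ℝ → ℝ, IntegrableOn g (Ioo 0 a) ∧
      ∀ t ∈ Icc t₁ t₂, ∀ ρ ∈ Ioo 0 a,
        energyDensity u₀ u₁ t ρ ≤ g ρ ∧ |deriv (energyDensity u₀ u₁ · ρ) t| ≤ g ρ)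
    (hinit : ∀ ρ ∈ Ioo 0 a, u₀ 0 ρ = 0 ∧ u₁ 0 ρ = 0) (hρ : 0 < ρ) (hρt : ρ < a - |t|) :
    u₀ t ρ = 0 ∧ u₁ t ρ = 0 := by
  have hlaw : CausalConservationLaw a (energyDensity u₀ u₁) (energyFlux u₀ u₁) :=
    { hasDerivAt_density := fun t ρ hρ => hsol.hasDerivAt_energyDensity (hW t ρ hρ) hρ
      differentiableAt_flux := fun t ρ hρ => (hsol.hasDerivAt_energyFlux hρ).differentiableAt
      continuousOn_density := fun t => hsol.continuousOn_energyDensity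
      abs_flux_le := fun t ρ _ => abs_energyFlux_le_energyDensity
      tendsto_flux := fun t => by
        simpa only [mul_zero] using! (hbd t).const_mul (-2)
      exists_bound := fun t₁ t₂ => by
        obtain ⟨g, hg, hbound⟩ := hdom t₁ t₂
        refine ⟨g, hg, fun t ht ρ hρ => ?_⟩
        rw [← (hsol.hasDerivAt_energyDensity (hW t ρ hρ) hρ).deriv]
        exact hbound t ht ρ hρ }
  exact energyDensity_eq_zero_iff.1
    (hlaw.density_eq_zero (fun ρ hρ => energyDensity_eq_zero_iff.2 (hinit ρ hρ)) hρ hρt)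

end WaveEquation

/-- The potential for which `d = ∂_ρ + W` and `δ = -∂_ρ + W` are the model operators
`∂_ρ - κρ⁻¹ + mρ` and `-∂_ρ - κρ⁻¹ + mρ` on a cone; it does not depend on time. -/
noncomputable def conePotential (κ m : ℝ) (_t ρ : ℝ) : ℂ →ₗ[ℂ] ℂ :=
  ((m * ρ - κ / ρ : ℝ) : ℂ) • LinearMap.id

theorem conePotential_apply (κ m t ρ : ℝ) (z : ℂ) :
    conePotential κ m t ρ z = (m * ρ : ℝ) * z - (κ / ρ : ℝ) * z := by
  rw [conePotential, LinearMap.smul_apply, LinearMap.id_apply, smul_eq_mul, ofReal_sub, sub_mul]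

theorem isSymmetric_conePotential (κ m t ρ : ℝ) : (conePotential κ m t ρ).IsSymmetric :=
  LinearMap.IsSymmetric.id.smul (conj_ofReal _)

/-- Finite propagation speed, away from the cone tip, for the wave equation
`∂ₜu = iDu` of the perturbed operator `D = d + δ` with `d = ∂ρ - κρ⁻¹ + εsρ` and
`δ = -∂ρ - κρ⁻¹ + εsρ`: under the stated decay/integrability/boundary conditions, if the
initial data vanishes on `(0,a)` then the solution vanishes on `(0, a - |t|)` for `|t| ≤ a`. -/
theorem statement17 (κ s : ℝ) (ε : ℝ) (hε : ε = 1 ∨ ε = -1)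
    (a b : ℝ) (ha : 0 < a) (hab : a < b)
    (u₀ u₁ : ℝ → ℝ → ℂ)
    (hu₀ : ContDiffOn ℝ (⊤ : ℕ∞) (fun p : ℝ × ℝ => u₀ p.1 p.2)
      (Set.univ ×ˢ Set.Ioo 0 b))
    (hu₁ : ContDiffOn ℝ (⊤ : ℕ∞) (fun p : ℝ × ℝ => u₁ p.1 p.2)
      (Set.univ ×ˢ Set.Ioo 0 b))
    -- (1) the wave equation on ℝ × (0,b)
    (heq₀ : ∀ t : ℝ, ∀ ρ ∈ Set.Ioo (0:ℝ) b,
      deriv (fun t' => u₀ t' ρ) t =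
        Complex.I * (-(deriv (fun ρ' => u₁ t ρ') ρ) - (κ / ρ : ℝ) * u₁ t ρ
          + (ε * s * ρ : ℝ) * u₁ t ρ))
    (heq₁ : ∀ t : ℝ, ∀ ρ ∈ Set.Ioo (0:ℝ) b,
      deriv (fun t' => u₁ t' ρ) t =
        Complex.I * (deriv (fun ρ' => u₀ t ρ') ρ - (κ / ρ : ℝ) * u₀ t ρ
          + (ε * s * ρ : ℝ) * u₀ t ρ))
    -- (2) boundary condition at the tip
    (hbd : ∀ t : ℝ,
      Tendsto (fun ρ => u₀ t ρ * (starRingEnd ℂ) (u₁ t ρ)) (nhdsWithin 0 (Set.Ioi 0))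
        (nhds 0))
    -- (3) local domination by an integrable function, on every compact time interval
    (hdom : ∀ t₁ t₂ : ℝ, ∃ g : ℝ → ℝ,
      IntegrableOn g (Set.Ioo 0 a) ∧
      ∀ t ∈ Set.Icc t₁ t₂, ∀ ρ ∈ Set.Ioo (0:ℝ) a,
        ‖u₀ t ρ‖ ^ 2 + ‖u₁ t ρ‖ ^ 2 ≤ g ρ ∧
        |deriv (fun t' => ‖u₀ t' ρ‖ ^ 2 + ‖u₁ t' ρ‖ ^ 2) t| ≤ g ρ)
    -- (4) vanishing initial data on (0,a)
    (hinit : ∀ ρ ∈ Set.Ioo (0:ℝ) a, u₀ 0 ρ = 0 ∧ u₁ 0 ρ = 0) :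
    ∀ t : ℝ, |t| ≤ a → ∀ ρ : ℝ, 0 < ρ → ρ < a - |t| → u₀ t ρ = 0 ∧ u₁ t ρ = 0 := by
  have hsol : IsWaveSolutionOn (Ioo 0 b) (conePotential κ (ε * s)) u₀ u₁ :=
    .of_differentiableOn isOpen_Ioo
      (hu₀.differentiableOn (by simp)) (hu₁.differentiableOn (by simp))
      (fun t ρ hρ => by rw [heq₀ t ρ hρ, conePotential_apply, smul_eq_mul]; ring)
      (fun t ρ hρ => by rw [heq₁ t ρ hρ, conePotential_apply, smul_eq_mul]; ring)
  exact fun t _ ρ => statement17_general (hsol.mono (Ioo_subset_Ioo_right hab.le))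
    (fun t ρ _ => isSymmetric_conePotential κ (ε * s) t ρ)
    (fun t => (continuous_im.tendsto 0).comp (hbd t)) hdom hinit
end
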